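/- arXiv:1205.5226 — 7 statements merged into one kernel-verified Lean document; each statement's English description precedes it below -/
import Mathlib

section
/- Under the piecewise expanding unimodal setup, for every x₀ ∈ (c₂, c₁) and every ε > 0 there exists a positive integer ℓ such that the set f^{−ℓ}(x₀) = {y ∈ I : f^ℓ(y) = x₀} is ε-dense in I = [a,b], i.e., every point of I lies within distance ε of some point y with f^ℓ(y) = x₀. -/
open Filter Topology

/-!
A nondegenerate interval that does not straddle `c` lies in one branch of `f`, so `f` lengthens it;
by compactness the gain is bounded below as long as the length is, and since lengths cannot exceed
`b - a`, some iterate of every interval straddles `c`. As `c` is interior to the core `[c₂, c₁]`,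
that iterate meets the core in a nondegenerate interval. Mixing brings points of this interval to
both sides of `x₀` at every large time, and the intermediate value theorem turns this into a hit.
Covering `[a, b]` by finitely many short intervals makes one time work for all of them.
-/

/-- `f` strictly increases the distance between any two distinct points of `s`. No uniform
expansion factor is required. -/
def IsExpandingOn {α β : Type*} [PseudoMetricSpace α] [PseudoMetricSpace β]
    (f : α → β) (s : Set α) : Prop :=
  ∀ ⦃x⦄, x ∈ s → ∀ ⦃y⦄, y ∈ s → x ≠ y → dist x y < dist (f x) (f y)

/-- Topological mixing of `f` on `s`, tested on the relatively open subsets `U ∩ s` of `s`.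
Invariance of `s` is not part of the notion. -/
def IsTopologicallyMixingOn {α : Type*} [TopologicalSpace α] (f : α → α) (s : Set α) : Prop :=
  ∀ U V : Set α, IsOpen U → IsOpen V → (U ∩ s).Nonempty → (V ∩ s).Nonempty →
    ∀ᶠ n in atTop, (f^[n] '' (U ∩ s) ∩ (V ∩ s)).Nonempty

theorem isExpandingOn_of_one_lt_abs_derivWithin {f : ℝ → ℝ} {s : Set ℝ} (hs : Convex ℝ s)
    (hf : DifferentiableOn ℝ f s) (hf' : ∀ x ∈ interior s, 1 < |derivWithin f s x|) :
    IsExpandingOn f s := by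
  intro x hx y hy hxy
  wlog hlt : x < y generalizing x y
  · simpa only [dist_comm] using this hy hx hxy.symm (hxy.lt_or_gt.resolve_left hlt)
  have hIcc : Set.Icc x y ⊆ s := hs.ordConnected.out hx hy
  have hIoo : Set.Ioo x y ⊆ interior s :=
    interior_Icc.symm.subset.trans (interior_mono hIcc)
  obtain ⟨z, hz, hslope⟩ := exists_deriv_eq_slope f hlt (hf.continuousOn.mono hIcc)
    (hf.mono (hIoo.trans interior_subset))
  have hz' : 1 < |(f y - f x) / (y - x)| := by
    rw [← hslope, ← derivWithin_of_mem_nhds (mem_interior_iff_mem_nhds.1 (hIoo hz))]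
    exact hf' z (hIoo hz)
  rwa [abs_div, one_lt_div (abs_pos.2 (sub_pos.2 hlt).ne'), ← Real.dist_eq, ← Real.dist_eq,
    dist_comm y, dist_comm (f y)] at hz'

theorem IsExpandingOn.exists_dist_add_le {α β : Type*} [PseudoMetricSpace α]
    [PseudoMetricSpace β] {f : α → β} {s : Set α} (hf : IsExpandingOn f s) (hs : IsCompact s)
    (hcont : ContinuousOn f s) {δ : ℝ} (hδ : 0 < δ) :
    ∃ η > 0, ∀ x ∈ s, ∀ y ∈ s, δ ≤ dist x y → dist x y + η ≤ dist (f x) (f y) := by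
  let K : Set (α × α) := (s ×ˢ s) ∩ {p | δ ≤ dist p.1 p.2}
  have hK : IsCompact K :=
    (hs.prod hs).inter_right (isClosed_le continuous_const continuous_dist)
  have hfst : ContinuousOn (fun p : α × α => f p.1) K :=
    hcont.comp continuousOn_fst fun _ hp => hp.1.1
  have hsnd : ContinuousOn (fun p : α × α => f p.2) K :=
    hcont.comp continuousOn_snd fun _ hp => hp.1.2
  have hgain_cont : ContinuousOn (fun p : α × α => dist (f p.1) (f p.2) - dist p.1 p.2) K :=
    (continuous_dist.comp_continuousOn (hfst.prodMk hsnd)).sub continuous_dist.continuousOn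
  have hgain_pos : ∀ p ∈ K, 0 < dist (f p.1) (f p.2) - dist p.1 p.2 := by
    rintro ⟨x, y⟩ ⟨⟨hx, hy⟩, (hxy : δ ≤ dist x y)⟩
    refine sub_pos.2 (hf hx hy fun (heq : x = y) => ?_)
    rw [heq, dist_self] at hxy
    exact hδ.not_ge hxy
  obtain ⟨η, hη, hle⟩ := hK.exists_forall_le' hgain_cont hgain_pos
  exact ⟨η, hη, fun x hx y hy hxy => le_sub_iff_add_le'.1 (hle (x, y) ⟨⟨hx, hy⟩, hxy⟩)⟩

theorem IsTopologicallyMixingOn.eventually_mem_image_iterate {α : Type*} [LinearOrder α]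
    [TopologicalSpace α] [OrderClosedTopology α] {f : α → α} {s J U : Set α}
    (hf : IsTopologicallyMixingOn f s) (hJ : IsPreconnected J)
    (hcont : ∀ n, ContinuousOn f^[n] J) (hU : IsOpen U) (hUs : (U ∩ s).Nonempty)
    (hUJ : U ∩ s ⊆ J) {x : α} (hlow : (Set.Iio x ∩ s).Nonempty)
    (hhigh : (Set.Ioi x ∩ s).Nonempty) :
    ∀ᶠ n in atTop, x ∈ f^[n] '' J := by
  filter_upwards [hf U _ hU isOpen_Iio hUs hlow, hf U _ hU isOpen_Ioi hUs hhigh]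
  rintro n ⟨_, ⟨y, hy, rfl⟩, hyx, -⟩ ⟨_, ⟨z, hz, rfl⟩, hxz, -⟩
  exact hJ.intermediate_value (hUJ hy) (hUJ hz) (hcont n) ⟨le_of_lt hyx, le_of_lt hxz⟩

theorem eventually_forall_exists_dist_lt_of_isCompact {ι α : Type*} [PseudoMetricSpace α]
    {l : Filter ι} {K : Set α} {S : ι → Set α} (hK : IsCompact K)
    (h : ∀ x ∈ K, ∀ δ > 0, ∀ᶠ i in l, ∃ y ∈ S i, dist x y < δ) {ε : ℝ} (hε : 0 < ε) :
    ∀ᶠ i in l, ∀ x ∈ K, ∃ y ∈ S i, dist x y < ε := by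
  obtain ⟨t, htK, ht, hcover⟩ := hK.finite_cover_balls (half_pos hε)
  filter_upwards [(eventually_all_finite ht).2 fun x hx => h x (htK hx) _ (half_pos hε)]
    with i hi x hx
  obtain ⟨z, hz, hxz⟩ := Set.mem_iUnion₂.1 (hcover hx)
  obtain ⟨y, hy, hzy⟩ := hi z hz
  refine ⟨y, hy, (dist_triangle x z y).trans_lt ?_⟩
  linarith [Metric.mem_ball.1 hxz]

section TwoBranches

variable {f : ℝ → ℝ} {a b c : ℝ}

theorem mem_Ioo_iterate_of_isExpandingOn (hc : c ∈ Set.Ioo a b)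
    (hmap : Set.MapsTo f (Set.Icc a b) (Set.Icc a b)) (hfa : f a = a)
    (hleft : IsExpandingOn f (Set.Icc a c)) (hright : IsExpandingOn f (Set.Icc c b))
    (hlt : f (f c) < f c) : c ∈ Set.Ioo (f (f c)) (f c) := by
  have hfc : f c ∈ Set.Icc a b := hmap (Set.Ioo_subset_Icc_self hc)
  have hc_lt : c < f c := by
    have h := hleft (Set.right_mem_Icc.2 hc.1.le) (Set.left_mem_Icc.2 hc.1.le) hc.1.ne'
    rw [hfa, Real.dist_eq, Real.dist_eq, abs_of_pos (sub_pos.2 hc.1),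
      abs_of_nonneg (sub_nonneg.2 hfc.1)] at h
    linarith
  have h := hright ⟨hc_lt.le, hfc.2⟩ (Set.left_mem_Icc.2 hc.2.le) hc_lt.ne'
  rw [dist_comm (f (f c)), Real.dist_eq, Real.dist_eq, abs_of_pos (sub_pos.2 hc_lt),
    abs_of_pos (sub_pos.2 hlt)] at h
  exact ⟨by linarith, hc_lt⟩

theorem exists_forall_length_add_le_of_notMem_Ioo
    (hmap : Set.MapsTo f (Set.Icc a b) (Set.Icc a b)) (hcont : ContinuousOn f (Set.Icc a b))
    (hc : c ∈ Set.Icc a b)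
    (hleft : IsExpandingOn f (Set.Icc a c)) (hright : IsExpandingOn f (Set.Icc c b))
    {δ : ℝ} (hδ : 0 < δ) :
    ∃ η > 0, ∀ p ∈ Set.Icc a b, ∀ q ∈ Set.Icc a b, δ ≤ q - p → c ∉ Set.Ioo p q →
      ∃ p' ∈ Set.Icc a b, ∃ q' ∈ Set.Icc a b,
        q - p + η ≤ q' - p' ∧ Set.Icc p' q' ⊆ f '' Set.Icc p q := by
  obtain ⟨η₁, hη₁, hgain₁⟩ := hleft.exists_dist_add_le isCompact_Icc
    (hcont.mono (Set.Icc_subset_Icc_right hc.2)) hδ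
  obtain ⟨η₂, hη₂, hgain₂⟩ := hright.exists_dist_add_le isCompact_Icc
    (hcont.mono (Set.Icc_subset_Icc_left hc.1)) hδ
  refine ⟨min η₁ η₂, lt_min hη₁ hη₂, fun p hp q hq hδpq hcpq => ?_⟩
  have hpq : p ≤ q := by linarith
  have hdist : dist q p = q - p := by rw [Real.dist_eq, abs_of_nonneg (sub_nonneg.2 hpq)]
  have hgain : q - p + min η₁ η₂ ≤ dist (f q) (f p) := by
    rw [← hdist] at hδpq ⊢
    rcases le_or_gt q c with hqc | hcq
    · exact (add_le_add_right (min_le_left _ _) _).trans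
        (hgain₁ q ⟨hq.1, hqc⟩ p ⟨hp.1, hpq.trans hqc⟩ hδpq)
    · have hcp : c ≤ p := not_lt.1 fun hpc => hcpq ⟨hpc, hcq⟩
      exact (add_le_add_right (min_le_right _ _) _).trans
        (hgain₂ q ⟨hcq.le, hq.2⟩ p ⟨hcp, hp.2⟩ hδpq)
  have himage : Set.uIcc (f p) (f q) ⊆ f '' Set.Icc p q := by
    simpa only [Set.uIcc_of_le hpq] using
      intermediate_value_uIcc (hcont.mono (Set.uIcc_subset_Icc hp hq))
  refine ⟨min (f p) (f q), ⟨le_min (hmap hp).1 (hmap hq).1, min_le_of_left_le (hmap hp).2⟩,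
    max (f p) (f q), ⟨le_max_of_le_left (hmap hp).1, max_le (hmap hp).2 (hmap hq).2⟩, ?_, himage⟩
  rwa [max_sub_min_eq_abs, ← Real.dist_eq]

theorem exists_mem_Ioo_Icc_subset_image_iterate
    (hmap : Set.MapsTo f (Set.Icc a b) (Set.Icc a b)) (hcont : ContinuousOn f (Set.Icc a b))
    (hc : c ∈ Set.Icc a b)
    (hleft : IsExpandingOn f (Set.Icc a c)) (hright : IsExpandingOn f (Set.Icc c b))
    {p q : ℝ} (hp : p ∈ Set.Icc a b) (hq : q ∈ Set.Icc a b) (hpq : p < q) :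
    ∃ k p' q', c ∈ Set.Ioo p' q' ∧ Set.Icc p' q' ⊆ f^[k] '' Set.Icc p q := by
  by_contra! havoid
  obtain ⟨η, hη, hgrow⟩ := exists_forall_length_add_le_of_notMem_Ioo hmap hcont hc hleft
    hright (sub_pos.2 hpq)
  have hlength : ∀ m : ℕ, ∃ p' ∈ Set.Icc a b, ∃ q' ∈ Set.Icc a b,
      q - p + m * η ≤ q' - p' ∧ Set.Icc p' q' ⊆ f^[m] '' Set.Icc p q := by
    intro m
    induction m with
    | zero => exact ⟨p, hp, q, hq, by simp, by simp⟩
    | succ m ih =>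
      obtain ⟨p₁, hp₁, q₁, hq₁, hlen₁, hsub₁⟩ := ih
      have hmη : 0 ≤ m * η := by positivity
      obtain ⟨p₂, hp₂, q₂, hq₂, hlen₂, hsub₂⟩ := hgrow p₁ hp₁ q₁ hq₁ (by linarith)
        fun hc₁ => havoid m p₁ q₁ hc₁ hsub₁
      refine ⟨p₂, hp₂, q₂, hq₂, by push_cast; linarith, hsub₂.trans ?_⟩
      rw [Function.iterate_succ', Set.image_comp]
      exact Set.image_mono hsub₁
  obtain ⟨m, hm⟩ := Archimedean.arch (b - a) hη
  obtain ⟨p', hp', q', hq', hlen, -⟩ := hlength m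
  rw [nsmul_eq_mul] at hm
  linarith [hp'.1, hq'.2]

theorem eventually_mem_image_iterate_Icc {u v : ℝ}
    (hmap : Set.MapsTo f (Set.Icc a b) (Set.Icc a b)) (hcont : ContinuousOn f (Set.Icc a b))
    (hleft : IsExpandingOn f (Set.Icc a c)) (hright : IsExpandingOn f (Set.Icc c b))
    (hau : a ≤ u) (hvb : v ≤ b) (hc : c ∈ Set.Ioo u v)
    (hmix : IsTopologicallyMixingOn f (Set.Icc u v)) {x₀ : ℝ} (hx₀ : x₀ ∈ Set.Ioo u v)
    {p q : ℝ} (hp : p ∈ Set.Icc a b) (hq : q ∈ Set.Icc a b) (hpq : p < q) :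
    ∀ᶠ n in atTop, x₀ ∈ f^[n] '' Set.Icc p q := by
  have huv : u ≤ v := (hc.1.trans hc.2).le
  have hcore : Set.Icc u v ⊆ Set.Icc a b := Set.Icc_subset_Icc hau hvb
  obtain ⟨k, p', q', hc', hsub⟩ := exists_mem_Ioo_Icc_subset_image_iterate hmap hcont
    (hcore (Set.Ioo_subset_Icc_self hc)) hleft hright hp hq hpq
  have hhit : ∀ᶠ n in atTop, x₀ ∈ f^[n] '' (Set.Icc p' q' ∩ Set.Icc u v) :=
    hmix.eventually_mem_image_iterate
      (Set.ordConnected_Icc.inter Set.ordConnected_Icc).isPreconnected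
      (fun n => (hcont.iterate hmap n).mono (Set.inter_subset_right.trans hcore))
      isOpen_Ioo ⟨c, hc', Set.Ioo_subset_Icc_self hc⟩
      (Set.inter_subset_inter_left _ Set.Ioo_subset_Icc_self)
      ⟨u, hx₀.1, Set.left_mem_Icc.2 huv⟩ ⟨v, hx₀.2, Set.right_mem_Icc.2 huv⟩
  rw [← map_add_atTop_eq_nat k, eventually_map]
  filter_upwards [hhit] with n hn
  rw [Function.iterate_add, Set.image_comp]
  exact Set.image_mono (Set.inter_subset_left.trans hsub) hn

theorem stmt_1_general {u v : ℝ}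
    (hmap : Set.MapsTo f (Set.Icc a b) (Set.Icc a b)) (hcont : ContinuousOn f (Set.Icc a b))
    (hleft : IsExpandingOn f (Set.Icc a c)) (hright : IsExpandingOn f (Set.Icc c b))
    (hau : a ≤ u) (hvb : v ≤ b) (hc : c ∈ Set.Ioo u v)
    (hmix : IsTopologicallyMixingOn f (Set.Icc u v)) {x₀ : ℝ} (hx₀ : x₀ ∈ Set.Ioo u v)
    {ε : ℝ} (hε : 0 < ε) :
    ∀ᶠ n in atTop, ∀ x ∈ Set.Icc a b, ∃ y ∈ Set.Icc a b, f^[n] y = x₀ ∧ |x - y| < ε := by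
  have hab : a < b := by linarith [hc.1, hc.2]
  have hlocal : ∀ x ∈ Set.Icc a b, ∀ δ > 0,
      ∀ᶠ n in atTop, ∃ y ∈ Set.Icc a b ∩ f^[n] ⁻¹' {x₀}, dist x y < δ := by
    intro x hx δ hδ
    have hlt : max a (x - δ / 2) < min b (x + δ / 2) :=
      max_lt (lt_min hab (by linarith [hx.1])) (lt_min (by linarith [hx.2]) (by linarith))
    filter_upwards [eventually_mem_image_iterate_Icc hmap hcont hleft hright hau hvb hc hmix hx₀
      ⟨le_max_left _ _, hlt.le.trans (min_le_left _ _)⟩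
      ⟨(le_max_left _ _).trans hlt.le, min_le_left _ _⟩ hlt]
    rintro n ⟨y, ⟨hmax, hmin⟩, hy⟩
    obtain ⟨hay, hxy⟩ := max_le_iff.1 hmax
    obtain ⟨hyb, hyx⟩ := le_min_iff.1 hmin
    refine ⟨y, ⟨⟨hay, hyb⟩, hy⟩, ?_⟩
    rw [Real.dist_eq, abs_lt]
    constructor <;> linarith
  simpa only [Set.mem_inter_iff, Set.mem_preimage, Set.mem_singleton_iff, and_assoc,
    Real.dist_eq] using eventually_forall_exists_dist_lt_of_isCompact isCompact_Icc hlocal hε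

end TwoBranches

/-- Under the piecewise expanding unimodal setup, for every `x₀ ∈ (c₂, c₁)` and every
`ε > 0` there is `ℓ ≥ 1` such that `f^{-ℓ}(x₀)` is `ε`-dense in `I = [a, b]`. -/
theorem stmt_1
    -- Setup: piecewise expanding unimodal map
    (f : ℝ → ℝ) (a b c : ℝ)
    (hab : a < b) (hc : c ∈ Set.Ioo a b)
    (hmap : Set.MapsTo f (Set.Icc a b) (Set.Icc a b))
    (hcont : ContinuousOn f (Set.Icc a b))
    (hfa : f a = a) (hfb : f b = a)
    (hC3L : ContDiffOn ℝ 3 f (Set.Icc a c))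
    (hC3R : ContDiffOn ℝ 3 f (Set.Icc c b))
    (hd1 : ∀ x ∈ Set.Icc a c, 1 < derivWithin f (Set.Icc a c) x)
    (hd2 : ∀ x ∈ Set.Icc c b, derivWithin f (Set.Icc c b) x < -1)
    (hnotper : ∀ n : ℕ, 1 ≤ n → f^[n] c ≠ c)
    (hinf : (Set.range fun k : ℕ => f^[k + 1] c).Infinite)
    (hmix : ∀ U V : Set ℝ,
      (∃ U₀, IsOpen U₀ ∧ U = U₀ ∩ Set.Icc (f^[2] c) (f^[1] c)) →
      (∃ V₀, IsOpen V₀ ∧ V = V₀ ∩ Set.Icc (f^[2] c) (f^[1] c)) →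
      U.Nonempty → V.Nonempty → ∃ N : ℕ, ∀ n, N ≤ n → (f^[n] '' U ∩ V).Nonempty) :
    -- Conclusion
    ∀ x₀ ∈ Set.Ioo (f^[2] c) (f^[1] c), ∀ ε : ℝ, 0 < ε →
      ∃ ℓ : ℕ, 0 < ℓ ∧ ∀ x ∈ Set.Icc a b, ∃ y ∈ Set.Icc a b, f^[ℓ] y = x₀ ∧ |x - y| ≤ ε := by
  intro x₀ hx₀ ε hε
  have hleft : IsExpandingOn f (Set.Icc a c) :=
    isExpandingOn_of_one_lt_abs_derivWithin (convex_Icc a c) (hC3L.differentiableOn (by norm_num))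
      fun x hx => (hd1 x (interior_subset hx)).trans_le (le_abs_self _)
  have hright : IsExpandingOn f (Set.Icc c b) :=
    isExpandingOn_of_one_lt_abs_derivWithin (convex_Icc c b) (hC3R.differentiableOn (by norm_num))
      fun x hx => lt_abs.2 (.inr (lt_neg.1 (hd2 x (interior_subset hx))))
  have hmixing : IsTopologicallyMixingOn f (Set.Icc (f^[2] c) (f^[1] c)) :=
    fun U V hU hV hUs hVs =>
      eventually_atTop.2 (hmix _ _ ⟨U, hU, rfl⟩ ⟨V, hV, rfl⟩ hUs hVs)
  have hfc : f c ∈ Set.Icc a b := hmap (Set.Ioo_subset_Icc_self hc)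
  have hcore : c ∈ Set.Ioo (f^[2] c) (f^[1] c) :=
    mem_Ioo_iterate_of_isExpandingOn hc hmap hfa hleft hright (hx₀.1.trans hx₀.2)
  obtain ⟨ℓ, hdense, hℓ⟩ := ((stmt_1_general hmap hcont hleft hright (hmap hfc).1 hfc.2 hcore
    hmixing hx₀ hε).and (eventually_gt_atTop 0)).exists
  refine ⟨ℓ, hℓ, fun x hx => ?_⟩
  obtain ⟨y, hy, hyx₀, hxy⟩ := hdense x hx
  exact ⟨y, hy, hyx₀, hxy.le⟩
end

section
/- Let (E,d) be a metric space, T : E → E a continuous map, and γ ∈ E a point whose forward orbit (γ_k = T^k(γ))_{k≥0} is dense in E. Then a two-sided sequence (x_n)_{n∈ℤ} in E is a right limit of (γ_k)_{k≥0} if and only if it is a complete orbit of T, i.e., x_{n+1} = T(x_n) for all n ∈ ℤ. -/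
open Filter Topology

/-- `b : ℤ → E` is a *right limit* of the sequence `a : ℕ → E`. -/
def IsRightLimit {E : Type*} [TopologicalSpace E] (a : ℕ → E) (b : ℤ → E) : Prop :=
  ∃ k : ℕ → ℕ, StrictMono k ∧ (∀ j, 0 < k j) ∧
    ∀ n : ℤ, Tendsto (fun j => a (n + (k j : ℤ)).toNat) atTop (𝓝 (b n))

/-!
Seen from time `k`, the sequence `a` is the two-sided sequence `n ↦ a (n + k)`, and in a
first-countable space the right limits of `a` are the cluster points in `ℤ → E` of these sequences
as `k → ∞`. For an orbit of `T`, each relation `y (n + 1) = T (y n)` is closed in `y` and eventually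
holds, so it passes to cluster points. Conversely, a finite window of a complete orbit `x` lies on
the forward orbit of `x (-N)` for `N` large; an orbit point `T^m γ` close enough to `x (-N)` then
shadows `x` along this window, and the window is seen from time `m + N`, which is as late as desired
because `N` is.
-/

/-- The sequence `a` seen from time `k`, as the two-sided sequence `n ↦ a (n + k)`. Its entries with
`n < -k` are junk, equal to `a 0`. -/
def recenter {E : Type*} (a : ℕ → E) (k : ℕ) : ℤ → E :=
  fun n => a (n + (k : ℤ)).toNat

/-- `x` is a *complete orbit* of `T`: a two-sided sequence in which `T` sends each term to the
next. -/
def IsCompleteOrbit {E : Type*} (T : E → E) (x : ℤ → E) : Prop :=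
  ∀ n : ℤ, x (n + 1) = T (x n)

section Orbits

variable {E : Type*} {T : E → E} {x : ℤ → E}

theorem IsCompleteOrbit.iterate_apply (hx : IsCompleteOrbit T x) (i : ℕ) (n : ℤ) :
    T^[i] (x n) = x (n + i) := by
  have hsemiconj : Function.Semiconj x (· + 1) T := hx
  simpa using ((hsemiconj.iterate_right i).eq n).symm

theorem recenter_iterate_add_one {γ : E} {k : ℕ} {n : ℤ} (hn : -(k : ℤ) ≤ n) :
    recenter (fun i => T^[i] γ) k (n + 1) = T (recenter (fun i => T^[i] γ) k n) := by
  have htime : (n + 1 + (k : ℤ)).toNat = (n + (k : ℤ)).toNat + 1 := by omega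
  simp only [recenter, htime, Function.iterate_succ_apply']

theorem recenter_iterate_add {γ : E} {m N : ℕ} {n : ℤ} (hn : -(N : ℤ) ≤ n) :
    recenter (fun i => T^[i] γ) (m + N) n = T^[(n + N).toNat] (T^[m] γ) := by
  have htime : (n + ((m + N : ℕ) : ℤ)).toNat = (n + N).toNat + m := by omega
  simp only [recenter, htime, Function.iterate_add_apply]

end Orbits

theorem eventually_neg_natCast_le (n : ℤ) : ∀ᶠ k : ℕ in atTop, -(k : ℤ) ≤ n := by
  filter_upwards [eventually_ge_atTop n.natAbs] with k hk
  omega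

section Topology

variable {E : Type*} [TopologicalSpace E]

theorem isRightLimit_iff_mapClusterPt_recenter [FirstCountableTopology E] {a : ℕ → E}
    {b : ℤ → E} : IsRightLimit a b ↔ MapClusterPt b atTop (recenter a) := by
  constructor
  · rintro ⟨k, hk, -, hlim⟩
    have hlim_pi : Tendsto (recenter a ∘ k) atTop (𝓝 b) := tendsto_pi_nhds.2 hlim
    exact hlim_pi.mapClusterPt.of_comp hk.tendsto_atTop
  · intro hb
    obtain ⟨k, hk, hlim⟩ := hb.tendsto_subseq
    -- Dropping the first index makes all the times positive.
    exact ⟨fun j => k (j + 1), hk.comp fun _ _ => Nat.succ_lt_succ,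
      fun j => j.succ_pos.trans_le (hk.id_le _),
      tendsto_pi_nhds.1 (hlim.comp (tendsto_add_atTop_nat 1))⟩

theorem mem_closure_range_of_mapClusterPt_recenter {a : ℕ → E} {b : ℤ → E}
    (hb : MapClusterPt b atTop (recenter a)) (n : ℤ) : b n ∈ closure (Set.range a) :=
  (isClosed_closure.preimage (continuous_apply n)).mem_of_mapClusterPt hb
    (Eventually.of_forall fun _ => subset_closure (Set.mem_range_self _))

variable {T : E → E} {γ : E} {x : ℤ → E}

theorem isCompleteOrbit_of_mapClusterPt_recenter [T2Space E] (hT : Continuous T)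
    (hx : MapClusterPt x atTop (recenter fun i => T^[i] γ)) : IsCompleteOrbit T x := by
  intro n
  have hclosed : IsClosed {y : ℤ → E | y (n + 1) = T (y n)} :=
    isClosed_eq (continuous_apply (n + 1)) (hT.comp (continuous_apply n))
  exact hclosed.mem_of_mapClusterPt hx
    ((eventually_neg_natCast_le n).mono fun _ => recenter_iterate_add_one)

theorem IsCompleteOrbit.eventually_forall_iterate_mem (hx : IsCompleteOrbit T x)
    (hT : Continuous T) {N : ℕ} {I : Finset ℤ} (hI : ∀ n ∈ I, -(N : ℤ) ≤ n) {U : ℤ → Set E}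
    (hU : ∀ n, U n ∈ 𝓝 (x n)) :
    ∀ᶠ y in 𝓝 (x (-N)), ∀ n ∈ I, T^[(n + N).toNat] y ∈ U n := by
  refine (eventually_all_finset I).2 fun n hn => (hT.iterate _).continuousAt.eventually_mem ?_
  have htime : -(N : ℤ) + ((n + N).toNat : ℤ) = n := by have := hI n hn; omega
  rw [hx.iterate_apply, htime]
  exact hU n

theorem IsCompleteOrbit.mapClusterPt_recenter (hx : IsCompleteOrbit T x) (hT : Continuous T)
    (hγ : ∀ n, x n ∈ closure (Set.range fun i : ℕ => T^[i] γ)) :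
    MapClusterPt x atTop (recenter fun i => T^[i] γ) := by
  refine mapClusterPt_iff_frequently.2 fun V hV => frequently_atTop.2 fun K => ?_
  obtain ⟨I, U, hU, hUV⟩ : ∃ I : Finset ℤ, ∃ U : ℤ → Set E,
      (∀ n, U n ∈ 𝓝 (x n)) ∧ (I : Set ℤ).pi U ⊆ V := by
    rwa [nhds_pi, mem_pi'] at hV
  obtain ⟨N, hKN, hI⟩ : ∃ N : ℕ, K ≤ N ∧ ∀ n ∈ I, -(N : ℤ) ≤ n :=
    ((eventually_ge_atTop K).and
      ((eventually_all_finset I).2 fun n _ => eventually_neg_natCast_le n)).exists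
  obtain ⟨_, hm, m, rfl⟩ :=
    mem_closure_iff_nhds.1 (hγ (-N)) _ (hx.eventually_forall_iterate_mem hT hI hU)
  refine ⟨m + N, le_add_left hKN, hUV fun n hn => ?_⟩
  rw [recenter_iterate_add (hI n hn)]
  exact hm n hn

theorem mapClusterPt_recenter_iterate_iff [T2Space E] (hT : Continuous T) :
    MapClusterPt x atTop (recenter fun i => T^[i] γ) ↔
      IsCompleteOrbit T x ∧ ∀ n, x n ∈ closure (Set.range fun i : ℕ => T^[i] γ) :=
  ⟨fun hx => ⟨isCompleteOrbit_of_mapClusterPt_recenter hT hx,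
    mem_closure_range_of_mapClusterPt_recenter hx⟩,
    fun ⟨hx, hγ⟩ => hx.mapClusterPt_recenter hT hγ⟩

end Topology

theorem stmt_2_general {E : Type*} [TopologicalSpace E] [T2Space E] [FirstCountableTopology E]
    {T : E → E} (hT : Continuous T) (γ : E) (x : ℤ → E) :
    IsRightLimit (fun k : ℕ => T^[k] γ) x ↔
      (∀ n : ℤ, x (n + 1) = T (x n)) ∧ ∀ n, x n ∈ closure (Set.range fun k : ℕ => T^[k] γ) :=
  isRightLimit_iff_mapClusterPt_recenter.trans (mapClusterPt_recenter_iterate_iff hT)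

/-- If `T : E → E` is continuous on a metric space and `γ` has dense forward orbit, then the
right limits of `(T^k γ)_{k ≥ 0}` are exactly the complete orbits of `T`. -/
theorem stmt_2 {E : Type*} [MetricSpace E] (T : E → E) (hT : Continuous T) (γ : E)
    (hdense : Dense (Set.range fun k : ℕ => T^[k] γ)) (x : ℤ → E) :
    IsRightLimit (fun k : ℕ => T^[k] γ) x ↔ ∀ n : ℤ, x (n + 1) = T (x n) :=
  (stmt_2_general hT γ x).trans (and_iff_left fun n => hdense (x n))
end

section
/- Assume the postcritical orbit (c_k)_{k≥1} is dense in [c₂,c₁]. Then the right limits of the sequence (c_{k+1})_{k≥0} are exactly the complete orbits of f contained in [c₂,c₁]: a two-sided sequence (x_n)_{n∈ℤ} is a right limit of (c_{k+1})_{k≥0} if and only if x_n ∈ [c₂,c₁] and x_{n+1} = f(x_n) for all n ∈ ℤ. -/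
open Filter Topology

/-!
A two-sided sequence `x` is a right limit of `a` exactly when it is a cluster point, in the product
space `ℤ → E`, of the shifts of `a`. On a finite window starting at time `-M`, a complete orbit `x`
of `f` is determined by `x (-M)` and depends continuously on it, so `x` is a cluster point of the
shifts of the orbit of `p` as soon as that orbit accumulates at every `x (-M)`.
For a unimodal map this applies to `p = f c`: density of the postcritical orbit both gives the
accumulation and forces `[c₂, c₁]` to be forward invariant.
-/

open Set

section RightLimit

variable {E : Type*} [TopologicalSpace E] {a : ℕ → E} {x : ℤ → E}

theorem isRightLimit_iff_mapClusterPt [FirstCountableTopology E] :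
    IsRightLimit a x ↔ MapClusterPt x atTop fun (k : ℕ) (n : ℤ) => a (n + (k : ℤ)).toNat := by
  constructor
  · rintro ⟨k, hk, -, hlim⟩
    exact (tendsto_pi_nhds.2 hlim).mapClusterPt.of_comp hk.tendsto_atTop
  · intro hx
    obtain ⟨k, hk, hlim⟩ := hx.tendsto_subseq
    -- Dropping the first term makes all the shifts positive.
    exact ⟨fun j => k (j + 1), hk.comp (strictMono_id.add_const 1),
      fun j => (Nat.zero_le j).trans_lt (hk.le_apply (x := j + 1)),
      fun n => (tendsto_pi_nhds.1 hlim n).comp (tendsto_add_atTop_nat 1)⟩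

namespace IsRightLimit

theorem mem_of_isClosed {s : Set E} (h : IsRightLimit a x) (hs : IsClosed s)
    (ha : ∀ k, a k ∈ s) (n : ℤ) : x n ∈ s := by
  obtain ⟨k, -, -, hlim⟩ := h
  exact hs.mem_of_tendsto (hlim n) (Eventually.of_forall fun _ => ha _)

theorem apply_add_one [T2Space E] {f : E → E} {s : Set E} {n : ℤ} (h : IsRightLimit a x)
    (ha : ∀ k, a k ∈ s) (hrec : ∀ k, a (k + 1) = f (a k)) (hf : ContinuousWithinAt f s (x n)) :
    x (n + 1) = f (x n) := by
  obtain ⟨k, hk, -, hlim⟩ := h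
  have himage : Tendsto (fun j => f (a (n + (k j : ℤ)).toNat)) atTop (𝓝 (f (x n))) :=
    hf.tendsto.comp (tendsto_nhdsWithin_iff.2 ⟨hlim n, Eventually.of_forall fun _ => ha _⟩)
  refine tendsto_nhds_unique ((hlim (n + 1)).congr' ?_) himage
  -- Only once `n + k j` is nonnegative does `toNat` commute with adding one.
  filter_upwards [eventually_ge_atTop n.natAbs] with j hj
  have hjk : j ≤ k j := hk.le_apply
  rw [show (n + 1 + (k j : ℤ)).toNat = (n + (k j : ℤ)).toNat + 1 by lia, hrec]

end IsRightLimit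

end RightLimit

section CompleteOrbit

theorem iterate_eq_of_apply_add_one {E : Type*} {f : E → E} {x : ℤ → E}
    (hx : ∀ n, x (n + 1) = f (x n)) (n : ℤ) (i : ℕ) : f^[i] (x n) = x (n + i) := by
  induction i with
  | zero => simp
  | succ i ih => rw [Function.iterate_succ_apply', ih, ← hx, Nat.cast_add_one, add_assoc]

variable {E : Type*} [TopologicalSpace E] {f : E → E} {s : Set E} {p : E} {x : ℤ → E}

theorem mapClusterPt_shift_iterate (hf : ContinuousOn f s) (hs : MapsTo f s s) (hp : p ∈ s)
    (hxs : ∀ n, x n ∈ s) (hx : ∀ n, x (n + 1) = f (x n))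
    (hcluster : ∀ n, MapClusterPt (x n) atTop fun k => f^[k] p) :
    MapClusterPt x atTop fun (k : ℕ) (n : ℤ) => f^[(n + (k : ℤ)).toNat] p := by
  refine mapClusterPt_iff_frequently.2 fun W hW => ?_
  rw [nhds_pi] at hW
  obtain ⟨I, hI, t, ht, htW⟩ := Filter.mem_pi.1 hW
  obtain ⟨M, hM⟩ : ∃ M : ℕ, ∀ i ∈ I, -(M : ℤ) ≤ i := by
    obtain ⟨m, hm⟩ := hI.bddBelow
    exact ⟨m.natAbs, fun i hi => by have := hm hi; lia⟩
  have hwindow : ∀ᶠ y in 𝓝[s] x (-M), ∀ i ∈ I, f^[(i + M).toNat] y ∈ t i := by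
    refine (eventually_all_finite hI).2 fun i hi => ?_
    have hxi : f^[(i + M).toNat] (x (-M)) = x i := by
      rw [iterate_eq_of_apply_add_one hx]
      congr 1
      have := hM i hi
      lia
    exact (hf.iterate hs _ _ (hxs _)).eventually_mem (hxi ▸ ht i)
  have hvisit : ∃ᶠ m in atTop, ∀ i ∈ I, f^[(i + M).toNat] (f^[m] p) ∈ t i :=
    ((hcluster (-M)).frequently (eventually_nhdsWithin_iff.1 hwindow)).mono
      fun m hm => hm (hs.iterate m hp)
  refine (tendsto_add_atTop_nat M).frequently (hvisit.mono fun m hm => htW fun i hi => ?_)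
  have := hM i hi
  rw [show (i + ((m + M : ℕ) : ℤ)).toNat = (i + M).toNat + m by lia, Function.iterate_add_apply]
  exact hm i hi

theorem isRightLimit_iterate_iff [T2Space E] [FirstCountableTopology E] (hsc : IsClosed s)
    (hf : ContinuousOn f s) (hs : MapsTo f s s) (hp : p ∈ s)
    (hcluster : ∀ y ∈ s, MapClusterPt y atTop fun k => f^[k] p) :
    IsRightLimit (fun k => f^[k] p) x ↔ ∀ n, x n ∈ s ∧ x (n + 1) = f (x n) := by
  have horbit : ∀ k, f^[k] p ∈ s := fun k => hs.iterate k hp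
  constructor
  · intro h n
    have hxn := h.mem_of_isClosed hsc horbit n
    exact ⟨hxn, h.apply_add_one horbit (fun k => Function.iterate_succ_apply' f k p) (hf _ hxn)⟩
  · intro h
    exact isRightLimit_iff_mapClusterPt.2 <| mapClusterPt_shift_iterate hf hs hp
      (fun n => (h n).1) (fun n => (h n).2) fun n => hcluster _ (h n).1

end CompleteOrbit

theorem mapClusterPt_of_accPt_range {E : Type*} [TopologicalSpace E] [T1Space E] {u : ℕ → E} {y : E}
    (hy : AccPt y (𝓟 (range u))) : MapClusterPt y atTop u := by
  refine mapClusterPt_iff_frequently.2 fun s hs => frequently_atTop.2 fun K => ?_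
  have hinitial : ∀ᶠ z in 𝓝[≠] y, z ∉ u '' Iio K :=
    nhdsNE_le_cofinite y ((finite_Iio K).image u).compl_mem_cofinite
  obtain ⟨_, ⟨⟨k, rfl⟩, hk⟩, hks⟩ := ((accPt_iff_frequently_nhdsNE.1 hy).and_eventually
    hinitial |>.and_eventually (eventually_nhdsWithin_of_eventually_nhds hs)).exists
  exact ⟨k, not_lt.1 fun hlt => hk (mem_image_of_mem u hlt), hks⟩

section LinearOrder

variable {α : Type*} [LinearOrder α] [TopologicalSpace α] [OrderTopology α] [DenselyOrdered α]

theorem preperfect_Icc {l r : α} (hlr : l < r) : Preperfect (Icc l r) := by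
  intro y hy
  rw [accPt_principal_iff_nhdsWithin]
  rcases hy.2.lt_or_eq with hyr | rfl
  · have := left_nhdsWithin_Ioo_neBot hyr
    exact this.mono (nhdsWithin_mono y fun z hz => ⟨⟨hy.1.trans hz.1.le, hz.2.le⟩, hz.1.ne'⟩)
  · have := right_nhdsWithin_Ioo_neBot hlr
    exact this.mono (nhdsWithin_mono y fun z hz => ⟨⟨hz.1.le, hz.2.le⟩, hz.2.ne⟩)

variable {f : α → α} {a b c p y : α}

theorem mapClusterPt_iterate_of_mem_Icc
    (hdense : Icc (f p) p ⊆ closure (range fun k => f^[k] p)) (hy : y ∈ Icc (f p) p) :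
    MapClusterPt y atTop fun k => f^[k] p := by
  rcases (hy.1.trans hy.2).lt_or_eq with hlt | hfix
  · apply mapClusterPt_of_accPt_range
    rw [← mem_derivedSet, ← derivedSet_closure]
    exact (preperfect_Icc hlt y hy).mono (principal_mono.2 hdense)
  · obtain rfl : y = p := le_antisymm hy.2 (hfix ▸ hy.1)
    simp only [Function.iterate_fixed hfix]
    exact tendsto_const_nhds.mapClusterPt

theorem apply_le_apply_apply_of_dense (hmono : MonotoneOn f (Icc a (f p)))
    (ha : ∀ k, a ≤ f^[k] p) (hp : f p ≤ p)
    (hdense : Icc (f p) p ⊆ closure (range fun k => f^[k] p)) : f p ≤ f (f p) := by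
  by_contra! hlt
  -- Otherwise the orbit starts at `p`, jumps to `f p`, and remains below it, missing `(f p, p)`.
  have hle : ∀ k, f^[k + 1] p ≤ f p := by
    intro k
    induction k with
    | zero => exact le_rfl
    | succ k ih =>
      rw [Function.iterate_succ_apply']
      exact (hmono ⟨ha _, ih⟩ ⟨ha 1, le_rfl⟩ ih).trans hlt.le
  have hne : f p ≠ p := fun h => by simp only [h, lt_self_iff_false] at hlt
  obtain ⟨m, hm⟩ := exists_between (hp.lt_of_ne hne)
  obtain ⟨_, hk, k, rfl⟩ := mem_closure_iff.1 (hdense (Ioo_subset_Icc_self hm)) _ isOpen_Ioo hm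
  cases k with
  | zero => exact hk.2.false
  | succ k => exact (hle k).not_gt hk.1

theorem mapsTo_Icc_of_dense_postcritical (hc : c ∈ Icc a b) (hmap : MapsTo f (Icc a b) (Icc a b))
    (hmono : MonotoneOn f (Icc a c)) (hanti : AntitoneOn f (Icc c b))
    (hdense : Icc (f (f c)) (f c) ⊆ closure (range fun k => f^[k] (f c))) :
    MapsTo f (Icc (f (f c)) (f c)) (Icc (f (f c)) (f c)) := by
  intro y hy
  have hc₁ := hmap hc
  have hc₂ := hmap hc₁
  have hyab : y ∈ Icc a b := Icc_subset_Icc hc₂.1 hc₁.2 hy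
  have hmax := isMaxOn_Icc_of_mono_anti hmono hanti
  refine ⟨?_, hmax hyab⟩
  rcases le_total y c with hyc | hcy
  · have hc₂c : f (f c) ≤ c := hy.1.trans hyc
    calc f (f c) ≤ f (f (f c)) :=
          apply_le_apply_apply_of_dense (hmono.mono (Icc_subset_Icc_right hc₂c))
            (fun k => (hmap.iterate k hc₁).1) (hmax hc₁) hdense
      _ ≤ f y := hmono ⟨hc₂.1, hc₂c⟩ ⟨hyab.1, hyc⟩ hy.1
  · exact hanti ⟨hcy, hyab.2⟩ ⟨hcy.trans hy.2, hc₁.2⟩ hy.2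

theorem stmt_4_general [FirstCountableTopology α] (hc : c ∈ Icc a b)
    (hmap : MapsTo f (Icc a b) (Icc a b)) (hcont : ContinuousOn f (Icc a b))
    (hmono : MonotoneOn f (Icc a c)) (hanti : AntitoneOn f (Icc c b))
    (hdense : Icc (f^[2] c) (f^[1] c) ⊆ closure (range fun k => f^[k + 1] c)) (x : ℤ → α) :
    IsRightLimit (fun k => f^[k + 1] c) x ↔
      ∀ n, x n ∈ Icc (f^[2] c) (f^[1] c) ∧ x (n + 1) = f (x n) := by
  have hc₁ := hmap hc
  have hc₂ := hmap hc₁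
  exact isRightLimit_iterate_iff isClosed_Icc (hcont.mono (Icc_subset_Icc hc₂.1 hc₁.2))
    (mapsTo_Icc_of_dense_postcritical hc hmap hmono hanti hdense)
    ⟨isMaxOn_Icc_of_mono_anti hmono hanti hc₁, le_rfl⟩
    fun _ => mapClusterPt_iterate_of_mem_Icc (p := f c) hdense

end LinearOrder

section Derivative

variable {f : ℝ → ℝ} {s : Set ℝ}

theorem monotoneOn_of_derivWithin_nonneg (hs : Convex ℝ s) (hf : DifferentiableOn ℝ f s)
    (hf' : ∀ y ∈ interior s, 0 ≤ derivWithin f s y) : MonotoneOn f s :=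
  monotoneOn_of_hasDerivWithinAt_nonneg hs hf.continuousOn
    (fun y hy => (hf y (interior_subset hy)).hasDerivWithinAt.mono interior_subset)
    hf'

theorem antitoneOn_of_derivWithin_nonpos (hs : Convex ℝ s) (hf : DifferentiableOn ℝ f s)
    (hf' : ∀ y ∈ interior s, derivWithin f s y ≤ 0) : AntitoneOn f s :=
  antitoneOn_of_hasDerivWithinAt_nonpos hs hf.continuousOn
    (fun y hy => (hf y (interior_subset hy)).hasDerivWithinAt.mono interior_subset)
    hf'

end Derivative

/-- If the postcritical orbit is dense in `[c₂, c₁]`, the right limits of `(c_{k+1})_{k ≥ 0}`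
are exactly the complete orbits of `f` contained in `[c₂, c₁]`. -/
theorem stmt_4
    -- Setup: piecewise expanding unimodal map
    (f : ℝ → ℝ) (a b c : ℝ)
    (hab : a < b) (hc : c ∈ Set.Ioo a b)
    (hmap : Set.MapsTo f (Set.Icc a b) (Set.Icc a b))
    (hcont : ContinuousOn f (Set.Icc a b))
    (hfa : f a = a) (hfb : f b = a)
    (hC3L : ContDiffOn ℝ 3 f (Set.Icc a c))
    (hC3R : ContDiffOn ℝ 3 f (Set.Icc c b))
    (hd1 : ∀ x ∈ Set.Icc a c, 1 < derivWithin f (Set.Icc a c) x)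
    (hd2 : ∀ x ∈ Set.Icc c b, derivWithin f (Set.Icc c b) x < -1)
    (hnotper : ∀ n : ℕ, 1 ≤ n → f^[n] c ≠ c)
    (hinf : (Set.range fun k : ℕ => f^[k + 1] c).Infinite)
    (hmix : ∀ U V : Set ℝ,
      (∃ U₀, IsOpen U₀ ∧ U = U₀ ∩ Set.Icc (f^[2] c) (f^[1] c)) →
      (∃ V₀, IsOpen V₀ ∧ V = V₀ ∩ Set.Icc (f^[2] c) (f^[1] c)) →
      U.Nonempty → V.Nonempty → ∃ N : ℕ, ∀ n, N ≤ n → (f^[n] '' U ∩ V).Nonempty)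
    -- density of the postcritical orbit in [c₂, c₁]
    (hdense : Set.Icc (f^[2] c) (f^[1] c) ⊆ closure (Set.range fun k : ℕ => f^[k + 1] c))
    (x : ℤ → ℝ) :
    IsRightLimit (fun k : ℕ => f^[k + 1] c) x ↔
      ∀ n : ℤ, x n ∈ Set.Icc (f^[2] c) (f^[1] c) ∧ x (n + 1) = f (x n) := by
  have hmono : MonotoneOn f (Icc a c) := monotoneOn_of_derivWithin_nonneg (convex_Icc a c)
    (hC3L.differentiableOn three_ne_zero) fun y hy =>
      zero_le_one.trans (hd1 y (interior_subset hy)).le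
  have hanti : AntitoneOn f (Icc c b) := antitoneOn_of_derivWithin_nonpos (convex_Icc c b)
    (hC3R.differentiableOn three_ne_zero) fun y hy =>
      (hd2 y (interior_subset hy)).le.trans (by norm_num)
  exact stmt_4_general (Ioo_subset_Icc_self hc) hmap hcont hmono hanti hdense x
end

section
/- Assume the postcritical orbit (c_k)_{k≥1} is dense in [c₂,c₁]. Then the set of precritical orbits of f — sequences (y_n)_{n≤−1} with y_n ∈ [c₂,c₁] for all n ≤ −1, f(y_{n−1}) = y_n for all n ≤ −1, and y_{−1} = c — is uncountable. -/
open Filter Topology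

/-!
On the core `[c₂, c₁]` the map has a fixed point `p ∈ (c, c₁)`. Transitivity of `f²` forces
`c₃ ≤ p`, for otherwise `f` would interchange `[c₂, p]` and `[p, c₁]`. If `c₃ ≤ p`, then among
any two consecutive points of an orbit in the core, at least one lies in `[c₃, c₁]`, where
both branches of `f` take every value. A precritical orbit never returns to `c`, so such a point
has a preimage other than the one chosen by the orbit. Precritical orbits thus form a nonempty
perfect subset of a countable product of discrete spaces, and such sets are uncountable.
-/

open Set Function

theorem not_countable_of_perfect {X : Type*} [TopologicalSpace X]
    [TopologicalSpace.IsCompletelyMetrizableSpace X] {C : Set X} (hC : Perfect C)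
    (hne : C.Nonempty) : ¬ C.Countable := by
  let := TopologicalSpace.upgradeIsCompletelyMetrizable X
  obtain ⟨F, hFC, -, hinj⟩ := hC.exists_nat_bool_injection hne
  intro hcount
  have hF : Countable (ℕ → Bool) := by
    have := (hcount.mono hFC).to_subtype
    exact (rangeFactorization_injective.2 hinj).countable
  have hcard : Cardinal.mk (ℕ → Bool) = Cardinal.continuum := by
    rw [← Cardinal.power_def, Cardinal.mk_bool, Cardinal.mk_nat, Cardinal.two_power_aleph0]
  exact Cardinal.aleph0_lt_continuum.not_ge (hcard ▸ Cardinal.mk_le_aleph0_iff.2 hF)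

theorem accPt_of_forall_mem_cylinder {E : ℕ → Type*} [∀ n, TopologicalSpace (E n)]
    {S : Set (∀ n, E n)} {y : ∀ n, E n} (h : ∀ n, ∃ w ∈ S, w ∈ PiNat.cylinder y n ∧ w ≠ y) :
    AccPt y (𝓟 S) := by
  choose w hwS hwy hne using h
  have hlim : Tendsto w atTop (𝓝 y) := by
    refine tendsto_pi_nhds.2 fun j => tendsto_const_nhds.congr' ?_
    filter_upwards [eventually_gt_atTop j] with n hn
    exact (hwy n j hn).symm
  exact accPt_iff_frequently.2 (hlim.frequently (.of_forall fun n => ⟨hne n, hwS n⟩))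

section BackwardOrbits

variable {α : Type*} {f : α → α} {s : Set α} {z : α} {y : ℕ → α}

/-- The backward orbits of `z` under `f` inside `s`, with time reversed: `y j` is the point
reached after `j` steps into the past. With `z` the critical point these are the precritical
orbits. -/
def backwardOrbits (f : α → α) (s : Set α) (z : α) : Set (ℕ → α) :=
  {y | (∀ j, y j ∈ s) ∧ y 0 = z ∧ ∀ j, f (y (j + 1)) = y j}

theorem cons_mem_backwardOrbits {x : α} (hz : z ∈ s) (hxz : f x = z)
    (hy : y ∈ backwardOrbits f s x) :
    (fun j => Nat.casesOn j z y : ℕ → α) ∈ backwardOrbits f s z := by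
  obtain ⟨hmem, rfl, hstep⟩ := hy
  exact ⟨Nat.rec hz fun j _ => hmem j, rfl, Nat.rec hxz fun j _ => hstep j⟩

theorem tail_mem_backwardOrbits (hy : y ∈ backwardOrbits f s z) :
    (fun j => y (j + 1)) ∈ backwardOrbits f s (y 1) :=
  ⟨fun j => hy.1 (j + 1), rfl, fun j => hy.2.2 (j + 1)⟩

theorem backwardOrbits_nonempty (hsurj : SurjOn f s s) (hz : z ∈ s) :
    (backwardOrbits f s z).Nonempty := by
  choose! g hgs hfg using hsurj
  have hmem (j : ℕ) : g^[j] z ∈ s := MapsTo.iterate (fun _ hx => hgs hx) j hz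
  refine ⟨fun j => g^[j] z, hmem, rfl, fun j => ?_⟩
  simp only [iterate_succ_apply', hfg (hmem j)]

theorem exists_backwardOrbit_branching (hsurj : SurjOn f s s) {m : ℕ} {x : α} (hxs : x ∈ s) :
    ∀ {z : α} {y : ℕ → α}, y ∈ backwardOrbits f s z → f x = y m →
      ∃ w ∈ backwardOrbits f s z, w ∈ PiNat.cylinder y (m + 1) ∧ w (m + 1) = x := by
  induction m with
  | zero =>
    rintro z y ⟨hmem, rfl, -⟩ hxy
    obtain ⟨v, hv⟩ := backwardOrbits_nonempty hsurj hxs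
    exact ⟨_, cons_mem_backwardOrbits (hmem 0) hxy hv, by simp [PiNat.cylinder], hv.2.1⟩
  | succ m ih =>
    intro z y hy hxy
    obtain ⟨w, hw, hwy, hwx⟩ := ih (tail_mem_backwardOrbits hy) hxy
    obtain ⟨hmem, rfl, hstep⟩ := hy
    refine ⟨_, cons_mem_backwardOrbits (hmem 0) (hstep 0) hw, ?_, hwx⟩
    rintro (_ | i) hi
    · rfl
    · exact hwy i (Nat.lt_of_succ_lt_succ hi)

theorem isClosed_backwardOrbits [TopologicalSpace α] [DiscreteTopology α] :
    IsClosed (backwardOrbits f s z) := by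
  simp only [backwardOrbits, ofPred_and, ofPred_forall]
  refine (isClosed_iInter fun j => (isClosed_discrete s).preimage (continuous_apply j)).inter
    ((isClosed_eq (continuous_apply 0) continuous_const).inter
      (isClosed_iInter fun j => isClosed_eq ?_ (continuous_apply j)))
  exact continuous_of_discreteTopology.comp (continuous_apply (j + 1))

theorem not_countable_backwardOrbits (hsurj : SurjOn f s s) (hz : z ∈ s)
    (hbranch : ∀ y ∈ backwardOrbits f s z, ∃ᶠ m in atTop, ∃ x ∈ s, x ≠ y (m + 1) ∧ f x = y m) :
    ¬ (backwardOrbits f s z).Countable := by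
  -- For the discrete topology on `α` the set is closed whether or not `f` is continuous.
  let : TopologicalSpace α := ⊥
  have : DiscreteTopology α := ⟨rfl⟩
  refine not_countable_of_perfect ⟨isClosed_backwardOrbits, fun y hy => ?_⟩
    (backwardOrbits_nonempty hsurj hz)
  refine accPt_of_forall_mem_cylinder fun n => ?_
  obtain ⟨m, hnm, x, hxs, hxne, hxy⟩ := frequently_atTop.1 (hbranch y hy) n
  obtain ⟨w, hw, hwy, hwx⟩ := exists_backwardOrbit_branching hsurj hxs hy hxy
  refine ⟨w, hw, PiNat.cylinder_anti y (by omega) hwy, ?_⟩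
  rintro rfl
  exact hxne hwx.symm

theorem iterate_eq_of_mem_backwardOrbits (hy : y ∈ backwardOrbits f s z) (m : ℕ) :
    f^[m] (y m) = z := by
  induction m with
  | zero => exact hy.2.1
  | succ m ih => rw [iterate_succ_apply, hy.2.2, ih]

theorem ne_of_mem_backwardOrbits (hz : z ∉ periodicPts f) (hy : y ∈ backwardOrbits f s z)
    (m : ℕ) : y (m + 1) ≠ z := by
  intro h
  have hreturn := iterate_eq_of_mem_backwardOrbits hy (m + 1)
  rw [h] at hreturn
  exact hz ⟨m + 1, m.succ_pos, hreturn⟩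

end BackwardOrbits

section Transitivity

variable {X : Type*} [TopologicalSpace X] {f : X → X} {s : Set X}

/-- Topological transitivity of `f` on the subspace `s`, which need not be invariant. -/
def IsTransitiveOn (f : X → X) (s : Set X) : Prop :=
  ∀ U V : Set X, IsOpen U → IsOpen V → (U ∩ s).Nonempty → (V ∩ s).Nonempty →
    ∃ n : ℕ, (f^[n] '' (U ∩ s) ∩ (V ∩ s)).Nonempty

/-- Topological mixing of `f` on the subspace `s`, which need not be invariant. -/
def IsMixingOn (f : X → X) (s : Set X) : Prop :=
  ∀ U V : Set X, IsOpen U → IsOpen V → (U ∩ s).Nonempty → (V ∩ s).Nonempty →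
    ∃ N : ℕ, ∀ n, N ≤ n → (f^[n] '' (U ∩ s) ∩ (V ∩ s)).Nonempty

theorem IsMixingOn.isTransitiveOn_iterate (h : IsMixingOn f s) {k : ℕ} (hk : 0 < k) :
    IsTransitiveOn f^[k] s := by
  intro U V hU hV hUs hVs
  obtain ⟨N, hN⟩ := h U V hU hV hUs hVs
  refine ⟨N, ?_⟩
  rw [← iterate_mul]
  exact hN _ (Nat.le_mul_of_pos_left N hk)

end Transitivity

section Unimodal

variable {α : Type*} [LinearOrder α] {f : α → α} {c p : α}

/-- `f` is unimodal on its core `[c₂, c₁]`, where `c₁ = f c` and `c₂ = f (f c)`, with the maximum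
attained at the turning point `c`. The branches may have flat pieces, and the core need not be
invariant. -/
structure IsUnimodalOnCore (f : α → α) (c : α) : Prop where
  mem_core : c ∈ Icc (f (f c)) (f c)
  monotoneOn : MonotoneOn f (Icc (f (f c)) c)
  antitoneOn : AntitoneOn f (Icc c (f c))

theorem IsUnimodalOnCore.mapsTo_iterate_two_of_fixedPt_le (h : IsUnimodalOnCore f c)
    (hp : p ∈ Icc c (f c)) (hfix : IsFixedPt f p) (hle : p ≤ f (f (f c))) :
    MapsTo f^[2] (Icc (f (f c)) p) (Icc (f (f c)) p) := by
  obtain ⟨hlc, hcr⟩ := h.mem_core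
  have hleft : MapsTo f (Icc (f (f c)) p) (Icc p (f c)) := by
    rintro x ⟨hlx, hxp⟩
    rcases le_total x c with hxc | hcx
    · exact ⟨hle.trans (h.monotoneOn ⟨le_rfl, hlc⟩ ⟨hlx, hxc⟩ hlx),
        h.monotoneOn ⟨hlx, hxc⟩ ⟨hlc, le_rfl⟩ hxc⟩
    · have hx : x ∈ Icc c (f c) := ⟨hcx, hxp.trans hp.2⟩
      exact ⟨hfix.symm.le.trans (h.antitoneOn hx hp hxp), h.antitoneOn ⟨le_rfl, hcr⟩ hx hcx⟩
  have hright : MapsTo f (Icc p (f c)) (Icc (f (f c)) p) := by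
    rintro x ⟨hpx, hxr⟩
    have hx : x ∈ Icc c (f c) := ⟨hp.1.trans hpx, hxr⟩
    exact ⟨h.antitoneOn hx ⟨hcr, le_rfl⟩ hxr, (h.antitoneOn hp hx hpx).trans hfix.le⟩
  exact hright.comp hleft

theorem IsUnimodalOnCore.map_left_le_or_map_left_le_map (h : IsUnimodalOnCore f c)
    (hp : p ∈ Icc c (f c)) (hfix : IsFixedPt f p) (hle : f (f (f c)) ≤ p) {x : α}
    (hx : x ∈ Icc (f (f c)) (f c)) : f (f (f c)) ≤ x ∨ f (f (f c)) ≤ f x := by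
  refine or_iff_not_imp_left.2 fun hlt => ?_
  have hxp : x ≤ p := (not_le.1 hlt).le.trans hle
  rcases le_total x c with hxc | hcx
  · exact h.monotoneOn ⟨le_rfl, h.mem_core.1⟩ ⟨hx.1, hxc⟩ hx.1
  · calc f (f (f c)) ≤ p := hle
      _ = f p := hfix.symm
      _ ≤ f x := h.antitoneOn ⟨hcx, hx.2⟩ hp hxp

theorem IsUnimodalOnCore.map_left_le_of_isTransitiveOn [TopologicalSpace α] [OrderTopology α]
    (h : IsUnimodalOnCore f c) (htrans : IsTransitiveOn f^[2] (Icc (f (f c)) (f c)))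
    (hp : p ∈ Ioo c (f c)) (hfix : IsFixedPt f p) : f (f (f c)) ≤ p := by
  by_contra! hlt
  have hinv := h.mapsTo_iterate_two_of_fixedPt_le (Ioo_subset_Icc_self hp) hfix hlt.le
  obtain ⟨hlc, hcr⟩ := h.mem_core
  obtain ⟨n, -, ⟨x, ⟨hxp, hx⟩, rfl⟩, hpx, -⟩ := htrans (Iio p) (Ioi p) isOpen_Iio isOpen_Ioi
    ⟨c, hp.1, hlc, hcr⟩ ⟨f c, hp.2, hlc.trans hcr, le_rfl⟩
  exact (hinv.iterate n ⟨hx.1, le_of_lt hxp⟩).2.not_gt hpx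

end Unimodal

section ContinuousCore

variable {α : Type*} [ConditionallyCompleteLinearOrder α] [TopologicalSpace α] [OrderTopology α]
  [DenselyOrdered α] {f : α → α} {c : α}

theorem exists_ne_map_eq_of_mem_inter {l r y : α} (hc : c ∈ Icc l r)
    (hcont : ContinuousOn f (Icc l r)) (hyc : y ≠ c)
    (hfy : f y ∈ Icc (f l) (f c) ∩ Icc (f r) (f c)) : ∃ x ∈ Icc l r, x ≠ y ∧ f x = f y := by
  rcases hyc.lt_or_gt with hlt | hgt
  · obtain ⟨x, hx, hxy⟩ :=
      intermediate_value_Icc' hc.2 (hcont.mono (Icc_subset_Icc_left hc.1)) hfy.2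
    exact ⟨x, Icc_subset_Icc_left hc.1 hx, (hlt.trans_le hx.1).ne', hxy⟩
  · obtain ⟨x, hx, hxy⟩ :=
      intermediate_value_Icc hc.1 (hcont.mono (Icc_subset_Icc_right hc.2)) hfy.1
    exact ⟨x, Icc_subset_Icc_right hc.2 hx, (hx.2.trans_lt hgt).ne, hxy⟩

theorem surjOn_core (hc : c ∈ Icc (f (f c)) (f c)) (hcont : ContinuousOn f (Icc c (f c))) :
    SurjOn f (Icc (f (f c)) (f c)) (Icc (f (f c)) (f c)) :=
  SurjOn.mono (Icc_subset_Icc_left hc.1) subset_rfl (intermediate_value_Icc' hc.2 hcont)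

theorem exists_isFixedPt_mem_Ioo (hc : c ∈ Icc (f (f c)) (f c))
    (hcont : ContinuousOn f (Icc c (f c))) (hfix : ¬ IsFixedPt f c) :
    ∃ p ∈ Ioo c (f c), IsFixedPt f p := by
  obtain ⟨p, hp, hfp⟩ := exists_mem_Icc_isFixedPt hcont hc.2 hc.2 (hc.1.trans hc.2)
  refine ⟨p, ⟨hp.1.lt_of_ne ?_, hp.2.lt_of_ne ?_⟩, hfp⟩
  · rintro rfl
    exact hfix hfp
  · rintro rfl
    exact hfix ((hfp.symm.le.trans hc.1).antisymm hc.2)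

theorem stmt_6_general (h : IsUnimodalOnCore f c) (hcont : ContinuousOn f (Icc (f (f c)) (f c)))
    (hper : c ∉ periodicPts f) (htrans : IsTransitiveOn f^[2] (Icc (f (f c)) (f c))) :
    ¬ (backwardOrbits f (Icc (f (f c)) (f c)) c).Countable := by
  have hc := h.mem_core
  have hcontR : ContinuousOn f (Icc c (f c)) := hcont.mono (Icc_subset_Icc_left hc.1)
  obtain ⟨p, hp, hfix⟩ := exists_isFixedPt_mem_Ioo hc hcontR
    fun hfc => hper ⟨1, one_pos, hfc.isPeriodicPt 1⟩
  have hle : f (f (f c)) ≤ p := h.map_left_le_of_isTransitiveOn htrans hp hfix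
  refine not_countable_backwardOrbits (surjOn_core hc hcontR) hc fun y hy => ?_
  have ⟨hmem, _, hstep⟩ := hy
  have hbranch (m : ℕ) (hm : f (f (f c)) ≤ y m) :
      ∃ x ∈ Icc (f (f c)) (f c), x ≠ y (m + 1) ∧ f x = y m := by
    have hne : y (m + 1) ≠ c := ne_of_mem_backwardOrbits hper hy m
    have hboth : y m ∈ Icc (f (f (f c))) (f c) ∩ Icc (f (f c)) (f c) :=
      ⟨⟨hm, (hmem m).2⟩, hmem m⟩
    rw [← hstep m] at hboth ⊢
    exact exists_ne_map_eq_of_mem_inter hc hcont hne hboth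
  refine frequently_atTop.2 fun n => ?_
  rcases h.map_left_le_or_map_left_le_map (Ioo_subset_Icc_self hp) hfix hle (hmem (n + 1))
    with hn | hn
  · exact ⟨n + 1, n.le_succ, hbranch _ hn⟩
  · exact ⟨n, le_rfl, hbranch n (by simpa only [hstep] using hn)⟩

end ContinuousCore

section Expanding

variable {f : ℝ → ℝ} {a b c : ℝ}

theorem mul_sub_lt_image_sub_of_lt_derivWithin {D : Set ℝ} (hD : Convex ℝ D)
    (hf : DifferentiableOn ℝ f D) {C : ℝ} (hf' : ∀ x ∈ D, C < derivWithin f D x) :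
    ∀ᵉ (x ∈ D) (y ∈ D), x < y → C * (y - x) < f y - f x := by
  refine hD.mul_sub_lt_image_sub_of_lt_deriv hf.continuousOn (hf.mono interior_subset) ?_
  intro x hx
  rw [← derivWithin_of_mem_nhds (mem_interior_iff_mem_nhds.1 hx)]
  exact hf' x (interior_subset hx)

theorem image_sub_lt_mul_sub_of_derivWithin_lt {D : Set ℝ} (hD : Convex ℝ D)
    (hf : DifferentiableOn ℝ f D) {C : ℝ} (hf' : ∀ x ∈ D, derivWithin f D x < C) :
    ∀ᵉ (x ∈ D) (y ∈ D), x < y → f y - f x < C * (y - x) := by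
  refine hD.image_sub_lt_mul_sub_of_deriv_lt hf.continuousOn (hf.mono interior_subset) ?_
  intro x hx
  rw [← derivWithin_of_mem_nhds (mem_interior_iff_mem_nhds.1 hx)]
  exact hf' x (interior_subset hx)

theorem map_map_le_of_expanding (hc : c ≤ f c) (hcb : f c ≤ b)
    (hexp : ∀ᵉ (x ∈ Icc c b) (y ∈ Icc c b), x < y → f y - f x < -1 * (y - x)) :
    f (f c) ≤ c := by
  by_contra! hlt
  have hcmem : c ∈ Icc c b := ⟨le_rfl, hc.trans hcb⟩
  have hcc₁ : c < f c := hc.lt_of_ne fun h => by rw [← h, ← h] at hlt; exact hlt.false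
  have hc₂c₁ : f (f c) < f c := by linarith [hexp c hcmem (f c) ⟨hc, hcb⟩ hcc₁]
  have hc₂mem : f (f c) ∈ Icc c b := ⟨hlt.le, hc₂c₁.le.trans hcb⟩
  have hc₃c₁ : f (f (f c)) < f c := by linarith [hexp c hcmem (f (f c)) hc₂mem hlt]
  linarith [hexp (f (f c)) hc₂mem (f c) ⟨hc, hcb⟩ hc₂c₁]

theorem isUnimodalOnCore_of_expanding (hac : a < c) (hfa : a ≤ f a) (hac₂ : a ≤ f (f c))
    (hcb : f c ≤ b) (hL : DifferentiableOn ℝ f (Icc a c)) (hR : DifferentiableOn ℝ f (Icc c b))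
    (hdL : ∀ x ∈ Icc a c, 1 < derivWithin f (Icc a c) x)
    (hdR : ∀ x ∈ Icc c b, derivWithin f (Icc c b) x < -1) : IsUnimodalOnCore f c := by
  have hexpL := mul_sub_lt_image_sub_of_lt_derivWithin (convex_Icc a c) hL hdL
  have hexpR := image_sub_lt_mul_sub_of_derivWithin_lt (convex_Icc c b) hR hdR
  have hmono : StrictMonoOn f (Icc a c) := fun x hx y hy hxy => by linarith [hexpL x hx y hy hxy]
  have hanti : StrictAntiOn f (Icc c b) := fun x hx y hy hxy => by linarith [hexpR x hx y hy hxy]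
  have hc : c ≤ f c := by
    linarith [hexpL a (left_mem_Icc.2 hac.le) c (right_mem_Icc.2 hac.le) hac]
  exact ⟨⟨map_map_le_of_expanding hc hcb hexpR, hc⟩,
    hmono.monotoneOn.mono (Icc_subset_Icc_left hac₂),
    hanti.antitoneOn.mono (Icc_subset_Icc_right hcb)⟩

end Expanding

/-- If the postcritical orbit is dense in `[c₂, c₁]`, the set of precritical orbits of `f`
is uncountable.  A precritical orbit `(y_n)_{n ≤ -1}` is encoded as `y : ℕ → ℝ` via
`y j = y_{-1-j}`: thus `y 0 = y_{-1} = c`, `f (y (j+1)) = y j` (i.e. `f (y_{n-1}) = y_n`),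
and every `y j` lies in `[c₂, c₁]`. -/
theorem stmt_6
    -- Setup: piecewise expanding unimodal map
    (f : ℝ → ℝ) (a b c : ℝ)
    (hab : a < b) (hc : c ∈ Set.Ioo a b)
    (hmap : Set.MapsTo f (Set.Icc a b) (Set.Icc a b))
    (hcont : ContinuousOn f (Set.Icc a b))
    (hfa : f a = a) (hfb : f b = a)
    (hC3L : ContDiffOn ℝ 3 f (Set.Icc a c))
    (hC3R : ContDiffOn ℝ 3 f (Set.Icc c b))
    (hd1 : ∀ x ∈ Set.Icc a c, 1 < derivWithin f (Set.Icc a c) x)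
    (hd2 : ∀ x ∈ Set.Icc c b, derivWithin f (Set.Icc c b) x < -1)
    (hnotper : ∀ n : ℕ, 1 ≤ n → f^[n] c ≠ c)
    (hinf : (Set.range fun k : ℕ => f^[k + 1] c).Infinite)
    (hmix : ∀ U V : Set ℝ,
      (∃ U₀, IsOpen U₀ ∧ U = U₀ ∩ Set.Icc (f^[2] c) (f^[1] c)) →
      (∃ V₀, IsOpen V₀ ∧ V = V₀ ∩ Set.Icc (f^[2] c) (f^[1] c)) →
      U.Nonempty → V.Nonempty → ∃ N : ℕ, ∀ n, N ≤ n → (f^[n] '' U ∩ V).Nonempty)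
    -- density of the postcritical orbit in [c₂, c₁]
    (hdense : Set.Icc (f^[2] c) (f^[1] c) ⊆ closure (Set.range fun k : ℕ => f^[k + 1] c)) :
    ¬ Set.Countable {y : ℕ → ℝ | (∀ j, y j ∈ Set.Icc (f^[2] c) (f^[1] c)) ∧ y 0 = c ∧
        ∀ j, f (y (j + 1)) = y j} := by
  have hcI := Ioo_subset_Icc_self hc
  have hc₁b : f c ≤ b := (hmap hcI).2
  have hac₂ : a ≤ f (f c) := (hmap (hmap hcI)).1
  have hcore : IsUnimodalOnCore f c := isUnimodalOnCore_of_expanding hc.1 hfa.ge hac₂ hc₁b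
    (hC3L.differentiableOn (by norm_num)) (hC3R.differentiableOn (by norm_num)) hd1 hd2
  have hmixing : IsMixingOn f (Icc (f (f c)) (f c)) :=
    fun U V hU hV => hmix _ _ ⟨U, hU, rfl⟩ ⟨V, hV, rfl⟩
  exact stmt_6_general hcore (hcont.mono (Icc_subset_Icc hac₂ hc₁b))
    (fun ⟨n, hn, h⟩ => hnotper n hn h) (hmixing.isTransitiveOn_iterate two_pos)
end

section
/- Let X be a compact metric space, T : X → X continuous, and μ a T-invariant Borel probability measure which is mixing: for all continuous φ, ψ : X → ℂ, ∫ (φ∘T^n)·ψ dμ → (∫ φ dμ)(∫ ψ dμ) as n → ∞. Let c ∈ X be Birkhoff typical: for every continuous φ : X → ℂ, (1/n) Σ_{k=0}^{n−1} φ(T^k(c)) → ∫ φ dμ as n → ∞. Then c is Wiener–Wintner typical: for every continuous φ : X → ℂ and every ω ∈ (0, 2π), (1/n) Σ_{k=0}^{n−1} e^{iωk} φ(T^k(c)) → 0 as n → ∞. -/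
open Filter Topology MeasureTheory

/-!
The proof is van der Corput's trick. Along an orbit, the averages of `g` and those of the window
sums `S_H = ∑ h < H, g ∘ f^[h]`, scaled by `1 / H`, have the same limiting behaviour, and by
Cauchy–Schwarz the latter are controlled by the averages of `‖S_H‖²`. Expanding the square, these
converge to a limit of size at most `2 H (|γ 0| + ⋯ + |γ (H - 1)|)`, where `γ h` is the `h`-th
autocorrelation of `g`. This is `o(H²)` as soon as `|γ h|` tends to zero in the mean.

The rotated averages of `φ` are the Birkhoff averages of `(x, w) ↦ w φ(x)` over the orbit of
`(c, 1)` under `(x, w) ↦ (T x, z w)`, where `z = exp (i ω)`. The `h`-th autocorrelation of this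
observable is the real part of `z ^ h ∫ (φ ∘ T^[h]) * conj φ`: rotating does not change the size of
the integral, and mixing makes it small when `φ` has mean zero. The constant part of `φ`
contributes an eigenfunction with eigenvalue `z ≠ 1`, whose averages telescope.
-/

open Bornology ComplexConjugate Set
open scoped BoundedContinuousFunction RealInnerProductSpace

section Averages

variable {α E 𝕜 : Type*} [RCLike 𝕜] [NormedAddCommGroup E] [NormedSpace 𝕜 E]
  {f : α → α} {g : α → E} {x : α}

lemma birkhoffAverage_comp_of_semiconj {β R M : Type*} [DivisionSemiring R] [AddCommMonoid M]
    [Module R M] {π : α → β} {r : β → β} (h : Function.Semiconj π f r) (g : β → M) (n : ℕ) (x : α) :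
    birkhoffAverage R f (g ∘ π) n x = birkhoffAverage R r g n (π x) := by
  simp only [birkhoffAverage, birkhoffSum, Function.comp_apply, (h.iterate_right _).eq]

lemma tendsto_birkhoffAverage_comp_self {l : E}
    (hg : IsBounded (range (g <| f^[·] x)))
    (h : Tendsto (birkhoffAverage 𝕜 f g · x) atTop (𝓝 l)) :
    Tendsto (birkhoffAverage 𝕜 f (g ∘ f) · x) atTop (𝓝 l) := by
  simpa [birkhoffAverage_comp_of_semiconj (Function.Commute.refl f)] using
    (tendsto_birkhoffAverage_apply_sub_birkhoffAverage 𝕜 hg).add h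

lemma tendsto_birkhoffAverage_zero_of_comp_eq_smul {z : 𝕜} (hz : z ≠ 1) (hgf : g ∘ f = z • g)
    (hg : IsBounded (range (g <| f^[·] x))) :
    Tendsto (birkhoffAverage 𝕜 f g · x) atTop (𝓝 0) := by
  have average_map (n : ℕ) : birkhoffAverage 𝕜 f g n (f x) = z • birkhoffAverage 𝕜 f g n x := by
    rw [← birkhoffAverage_comp_of_semiconj (Function.Commute.refl f), hgf]
    simp only [birkhoffAverage, birkhoffSum, Pi.smul_apply, ← Finset.smul_sum, smul_comm z]
  have h := (tendsto_birkhoffAverage_apply_sub_birkhoffAverage 𝕜 hg).const_smul (z - 1)⁻¹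
  rw [smul_zero] at h
  refine h.congr fun n => ?_
  calc (z - 1)⁻¹ • (birkhoffAverage 𝕜 f g n (f x) - birkhoffAverage 𝕜 f g n x)
      = (z - 1)⁻¹ • (z - 1) • birkhoffAverage 𝕜 f g n x := by rw [average_map, sub_smul, one_smul]
    _ = birkhoffAverage 𝕜 f g n x := inv_smul_smul₀ (sub_ne_zero.mpr hz) _

lemma isBounded_range_birkhoffSum_iterate (hg : IsBounded (range (g <| f^[·] x))) (H : ℕ) :
    IsBounded (range (birkhoffSum f g H <| f^[·] x)) := by
  obtain ⟨C, hC⟩ := isBounded_iff_forall_norm_le.mp hg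
  refine isBounded_iff_forall_norm_le.mpr ⟨H * C, forall_mem_range.mpr fun k => ?_⟩
  calc ‖birkhoffSum f g H (f^[k] x)‖
      ≤ ∑ h ∈ Finset.range H, ‖g (f^[h] (f^[k] x))‖ := norm_sum_le _ _
    _ ≤ ∑ _h ∈ Finset.range H, C := Finset.sum_le_sum fun h _ => by
        rw [← Function.iterate_add_apply]
        exact hC _ (mem_range_self (h + k))
    _ = H * C := by simp

lemma tendsto_birkhoffAverage_birkhoffSum_sub_smul (hg : IsBounded (range (g <| f^[·] x)))
    (H : ℕ) :
    Tendsto (fun n => birkhoffAverage 𝕜 f (birkhoffSum f g H) n x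
      - (H : 𝕜) • birkhoffAverage 𝕜 f g n x) atTop (𝓝 0) := by
  induction H with
  | zero => simp [birkhoffAverage, birkhoffSum]
  | succ H ih =>
    have hS : birkhoffSum f g (H + 1) = g + birkhoffSum f g H ∘ f :=
      funext (birkhoffSum_succ' f g H)
    have shift := tendsto_birkhoffAverage_apply_sub_birkhoffAverage 𝕜
      (isBounded_range_birkhoffSum_iterate hg H)
    have h := shift.add ih
    rw [add_zero] at h
    refine h.congr fun n => ?_
    rw [hS, birkhoffAverage_add, Pi.add_apply, Pi.add_apply,
      birkhoffAverage_comp_of_semiconj (Function.Commute.refl f), Nat.cast_succ, add_smul, one_smul]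
    abel

lemma norm_birkhoffAverage_sq_le (f : α → α) (g : α → E) (n : ℕ) (x : α) :
    ‖birkhoffAverage 𝕜 f g n x‖ ^ 2 ≤ birkhoffAverage ℝ f (fun y => ‖g y‖ ^ 2) n x := by
  have cauchy_schwarz : ‖birkhoffSum f g n x‖ ^ 2 ≤ n * birkhoffSum f (fun y => ‖g y‖ ^ 2) n x :=
    calc ‖birkhoffSum f g n x‖ ^ 2
        ≤ (∑ k ∈ Finset.range n, ‖g (f^[k] x)‖) ^ 2 := by gcongr; exact norm_sum_le _ _
      _ ≤ n * birkhoffSum f (fun y => ‖g y‖ ^ 2) n x := by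
        simpa only [Finset.card_range, birkhoffSum] using
          sq_sum_le_card_mul_sum_sq (s := Finset.range n) (f := fun k => ‖g (f^[k] x)‖)
  calc ‖birkhoffAverage 𝕜 f g n x‖ ^ 2
      = (n : ℝ)⁻¹ ^ 2 * ‖birkhoffSum f g n x‖ ^ 2 := by simp [birkhoffAverage, norm_smul, mul_pow]
    _ ≤ (n : ℝ)⁻¹ ^ 2 * (n * birkhoffSum f (fun y => ‖g y‖ ^ 2) n x) := by gcongr
    _ = birkhoffAverage ℝ f (fun y => ‖g y‖ ^ 2) n x := by
        rcases eq_or_ne n 0 with rfl | hn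
        · simp
        · rw [birkhoffAverage, smul_eq_mul]
          field_simp

end Averages

section VanDerCorput

variable {α E : Type*} [NormedAddCommGroup E] [InnerProductSpace ℝ E]
  {f : α → α} {g : α → E} {x : α} {γ : ℕ → ℝ}

lemma tendsto_birkhoffAverage_inner_birkhoffSum
    (hγ : ∀ h, Tendsto (birkhoffAverage ℝ f (fun y => ⟪g y, g (f^[h] y)⟫) · x) atTop (𝓝 (γ h)))
    (H : ℕ) :
    Tendsto (birkhoffAverage ℝ f (fun y => ⟪g y, birkhoffSum f g H (f y)⟫) · x) atTop
      (𝓝 (∑ h ∈ Finset.range H, γ (h + 1))) := by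
  induction H with
  | zero => simp [birkhoffAverage, birkhoffSum]
  | succ H ih =>
    have inner_succ : (fun y => ⟪g y, birkhoffSum f g (H + 1) (f y)⟫) =
        (fun y => ⟪g y, birkhoffSum f g H (f y)⟫) + fun y => ⟪g y, g (f^[H + 1] y)⟫ := by
      funext y
      simp only [birkhoffSum_succ, inner_add_right, Pi.add_apply, Function.iterate_succ_apply]
    rw [inner_succ, birkhoffAverage_add, Finset.sum_range_succ]
    exact ih.add (hγ (H + 1))

lemma tendsto_birkhoffAverage_norm_birkhoffSum_sq (hg : IsBounded (range (g <| f^[·] x)))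
    (hγ : ∀ h, Tendsto (birkhoffAverage ℝ f (fun y => ⟪g y, g (f^[h] y)⟫) · x) atTop (𝓝 (γ h)))
    (H : ℕ) :
    Tendsto (birkhoffAverage ℝ f (fun y => ‖birkhoffSum f g H y‖ ^ 2) · x) atTop
      (𝓝 (∑ j ∈ Finset.range H, (γ 0 + 2 * ∑ h ∈ Finset.range j, γ (h + 1)))) := by
  induction H with
  | zero => simp [birkhoffAverage, birkhoffSum]
  | succ H ih =>
    let cross : α → ℝ := fun y => ⟪g y, birkhoffSum f g H (f y)⟫
    have norm_sq_succ : (fun y => ‖birkhoffSum f g (H + 1) y‖ ^ 2) =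
        (fun y => ‖birkhoffSum f g H y‖ ^ 2) ∘ f + ((fun y => ⟪g y, g (f^[0] y)⟫)
          + (cross + cross)) := by
      funext y
      simp only [cross, birkhoffSum_succ', norm_add_sq_real, Pi.add_apply, Function.comp_apply,
        Function.iterate_zero, id, real_inner_self_eq_norm_sq]
      ring
    have norm_sq_bounded : IsBounded (range fun k => ‖birkhoffSum f g H (f^[k] x)‖ ^ 2) := by
      obtain ⟨C, hC⟩ := isBounded_iff_forall_norm_le.mp (isBounded_range_birkhoffSum_iterate hg H)
      refine isBounded_iff_forall_norm_le.mpr ⟨C ^ 2, forall_mem_range.mpr fun k => ?_⟩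
      rw [norm_pow, norm_norm]
      gcongr
      exact hC _ (mem_range_self k)
    have cross_lim := tendsto_birkhoffAverage_inner_birkhoffSum hγ H
    rw [norm_sq_succ, Finset.sum_range_succ, two_mul]
    simp only [birkhoffAverage_add]
    exact (tendsto_birkhoffAverage_comp_self norm_sq_bounded ih).add
      ((hγ 0).add (cross_lim.add cross_lim))

lemma sum_add_two_mul_sum_le (γ : ℕ → ℝ) (H : ℕ) :
    ∑ j ∈ Finset.range H, (γ 0 + 2 * ∑ h ∈ Finset.range j, γ (h + 1)) ≤
      H * (2 * ∑ h ∈ Finset.range H, |γ h|) := by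
  have term_le (j : ℕ) (hj : j ∈ Finset.range H) :
      γ 0 + 2 * ∑ h ∈ Finset.range j, γ (h + 1) ≤ 2 * ∑ h ∈ Finset.range H, |γ h| := by
    have sum_abs_le : |γ 0| + ∑ h ∈ Finset.range j, |γ (h + 1)| ≤ ∑ h ∈ Finset.range H, |γ h| := by
      rw [add_comm, ← Finset.sum_range_succ' (fun h => |γ h|)]
      exact Finset.sum_le_sum_of_subset_of_nonneg
        (Finset.range_mono (Finset.mem_range.mp hj)) fun h _ _ => abs_nonneg (γ h)
    have sum_le_sum_abs : ∑ h ∈ Finset.range j, γ (h + 1) ≤ ∑ h ∈ Finset.range j, |γ (h + 1)| :=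
      Finset.sum_le_sum fun h _ => le_abs_self _
    linarith [le_abs_self (γ 0), abs_nonneg (γ 0)]
  simpa using Finset.sum_le_card_nsmul _ _ _ term_le

lemma eventually_norm_birkhoffAverage_lt {H : ℕ} {L ε : ℝ} (hg : IsBounded (range (g <| f^[·] x)))
    (hL : Tendsto (birkhoffAverage ℝ f (fun y => ‖birkhoffSum f g H y‖ ^ 2) · x) atTop (𝓝 L))
    (hH : 0 < H) (hε : 0 < ε) (hLε : L < (H * ε) ^ 2) :
    ∀ᶠ n in atTop, ‖birkhoffAverage ℝ f g n x‖ < ε := by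
  have hH' : (0 : ℝ) < H := Nat.cast_pos.mpr hH
  have bound_lim := hL.sqrt.add (tendsto_birkhoffAverage_birkhoffSum_sub_smul (𝕜 := ℝ) hg H).norm
  rw [norm_zero, add_zero] at bound_lim
  have sqrt_lt : √L < H * ε := (Real.sqrt_lt' (by positivity)).mpr hLε
  filter_upwards [bound_lim.eventually_lt_const sqrt_lt] with n hn
  refine lt_of_mul_lt_mul_left (lt_of_le_of_lt ?_ hn) hH'.le
  calc H * ‖birkhoffAverage ℝ f g n x‖
      = ‖(H : ℝ) • birkhoffAverage ℝ f g n x‖ := by rw [norm_smul, RCLike.norm_natCast]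
    _ ≤ ‖birkhoffAverage ℝ f (birkhoffSum f g H) n x‖ +
        ‖birkhoffAverage ℝ f (birkhoffSum f g H) n x - (H : ℝ) • birkhoffAverage ℝ f g n x‖ :=
      norm_le_norm_add_norm_sub _ _
    _ ≤ _ := by
      gcongr
      exact Real.le_sqrt_of_sq_le (norm_birkhoffAverage_sq_le f _ n x)

theorem tendsto_birkhoffAverage_zero_of_autocorrelation (hg : IsBounded (range (g <| f^[·] x)))
    (hγ : ∀ h, Tendsto (birkhoffAverage ℝ f (fun y => ⟪g y, g (f^[h] y)⟫) · x) atTop (𝓝 (γ h)))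
    (hγ_mean : Tendsto (fun H : ℕ => (H : ℝ)⁻¹ * ∑ h ∈ Finset.range H, |γ h|) atTop (𝓝 0)) :
    Tendsto (birkhoffAverage ℝ f g · x) atTop (𝓝 0) := by
  refine NormedAddGroup.tendsto_nhds_zero.mpr fun ε hε => ?_
  obtain ⟨H, hγ_small, hH⟩ := ((hγ_mean.eventually_lt_const (show 0 < ε ^ 2 / 2 by positivity)).and
    (eventually_gt_atTop 0)).exists
  have hH' : (0 : ℝ) < H := Nat.cast_pos.mpr hH
  refine eventually_norm_birkhoffAverage_lt hg
    (tendsto_birkhoffAverage_norm_birkhoffSum_sq hg hγ H) hH hε ?_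
  calc ∑ j ∈ Finset.range H, (γ 0 + 2 * ∑ h ∈ Finset.range j, γ (h + 1))
      ≤ H * (2 * ∑ h ∈ Finset.range H, |γ h|) := sum_add_two_mul_sum_le γ H
    _ < H * (2 * (H * (ε ^ 2 / 2))) := by
        gcongr
        exact (inv_mul_lt_iff₀ hH').mp hγ_small
    _ = (H * ε) ^ 2 := by ring

end VanDerCorput

section Rotation

variable {X : Type*} {T : X → X} {φ : X → ℂ} {c : X}

/-- The observable `(x, w) ↦ w φ(x)` on `X × Circle`. Its Birkhoff sums along
`Prod.map T (z * ·)` starting from `(c, 1)` are the rotated sums `∑ z ^ k φ(T^k c)`. -/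
def circleTwist (φ : X → ℂ) (p : X × Circle) : ℂ := p.2 * φ p.1

lemma circleTwist_iterate (T : X → X) (φ : X → ℂ) (z : Circle) (k : ℕ) (p : X × Circle) :
    circleTwist φ ((Prod.map T (z * ·))^[k] p) = z ^ k * p.2 * φ (T^[k] p.1) := by
  simp [circleTwist, Prod.map_iterate]

lemma circleTwist_add (φ ψ : X → ℂ) : circleTwist (φ + ψ) = circleTwist φ + circleTwist ψ := by
  funext p
  simp only [circleTwist, Pi.add_apply, mul_add]

lemma isBounded_range_circleTwist_iterate (hφ : IsBounded (range (φ <| T^[·] c))) (z w : Circle) :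
    IsBounded (range (circleTwist φ <| (Prod.map T (z * ·))^[·] (c, w))) := by
  obtain ⟨C, hC⟩ := isBounded_iff_forall_norm_le.mp hφ
  refine isBounded_iff_forall_norm_le.mpr ⟨C, forall_mem_range.mpr fun k => ?_⟩
  rw [circleTwist_iterate, norm_mul, norm_mul, norm_pow, Circle.norm_coe, Circle.norm_coe, one_pow,
    one_mul, one_mul]
  exact hC _ (mem_range_self k)

lemma inner_circleTwist_iterate (T : X → X) (φ : X → ℂ) (z : Circle) (h : ℕ) (p : X × Circle) :
    ⟪circleTwist φ p, circleTwist φ ((Prod.map T (z * ·))^[h] p)⟫ =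
      (z ^ h * (φ (T^[h] p.1) * conj (φ p.1))).re := by
  have hw : (p.2 : ℂ) * conj (p.2 : ℂ) = 1 := by simp [Complex.mul_conj]
  rw [Complex.inner, circleTwist_iterate, circleTwist, map_mul]
  congr 1
  linear_combination ((z : ℂ) ^ h * φ (T^[h] p.1) * conj (φ p.1)) * hw

lemma tendsto_birkhoffAverage_inner_circleTwist {a : ℂ} {h : ℕ}
    (ha : Tendsto (birkhoffAverage ℂ T (fun x => φ (T^[h] x) * conj (φ x)) · c) atTop (𝓝 a))
    (z w : Circle) :
    Tendsto (birkhoffAverage ℝ (Prod.map T (z * ·))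
      (fun p => ⟪circleTwist φ p, circleTwist φ ((Prod.map T (z * ·))^[h] p)⟫) · (c, w)) atTop
      (𝓝 (z ^ h * a).re) := by
  let reMul : ℂ →+ ℝ := Complex.reAddGroupHom.comp (AddMonoidHom.mulLeft ((z : ℂ) ^ h))
  have reMul_lim : Tendsto (fun n => reMul
      (birkhoffAverage ℂ T (fun x => φ (T^[h] x) * conj (φ x)) n c)) atTop (𝓝 (reMul a)) :=
    (Complex.continuous_re.tendsto _).comp (ha.const_mul _)
  refine reMul_lim.congr fun n => ?_
  simp only [inner_circleTwist_iterate]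
  rw [map_birkhoffAverage ℂ ℝ reMul]
  exact (birkhoffAverage_comp_of_semiconj (R := ℝ) (π := Prod.fst) (fun _ => rfl) _ n (c, w)).symm

theorem tendsto_birkhoffAverage_circleTwist_zero {a : ℕ → ℂ}
    (hφ : IsBounded (range (φ <| T^[·] c)))
    (ha : ∀ h, Tendsto (birkhoffAverage ℂ T (fun x => φ (T^[h] x) * conj (φ x)) · c) atTop
      (𝓝 (a h)))
    (ha_mean : Tendsto (fun H : ℕ => (H : ℝ)⁻¹ * ∑ h ∈ Finset.range H, ‖a h‖) atTop (𝓝 0))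
    (z w : Circle) :
    Tendsto (birkhoffAverage ℂ (Prod.map T (z * ·)) (circleTwist φ) · (c, w)) atTop (𝓝 0) := by
  rw [birkhoffAverage_congr_ring' ℂ ℝ]
  refine tendsto_birkhoffAverage_zero_of_autocorrelation
    (isBounded_range_circleTwist_iterate hφ z w)
    (fun h => tendsto_birkhoffAverage_inner_circleTwist (ha h) z w)
    (squeeze_zero (fun H => by positivity) (fun H => ?_) ha_mean)
  gcongr with h
  calc |(z ^ h * a h).re| ≤ ‖z ^ h * a h‖ := Complex.abs_re_le_norm _
    _ = ‖a h‖ := by rw [norm_mul, norm_pow, Circle.norm_coe, one_pow, one_mul]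

lemma tendsto_birkhoffAverage_circleTwist_const {z : Circle} (hz : z ≠ 1) (T : X → X) (m : ℂ)
    (p : X × Circle) :
    Tendsto (birkhoffAverage ℂ (Prod.map T (z * ·)) (circleTwist fun _ => m) · p) atTop
      (𝓝 0) := by
  refine tendsto_birkhoffAverage_zero_of_comp_eq_smul (mt Circle.coe_eq_one.mp hz) ?_
    (isBounded_range_circleTwist_iterate ?_ z p.2)
  · funext p
    simp [circleTwist, mul_assoc]
  · simp

lemma birkhoffAverage_circleTwist_exp (T : X → X) (φ : X → ℂ) (ω : ℝ) (n : ℕ) (c : X) :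
    birkhoffAverage ℂ (Prod.map T (Circle.exp ω * ·)) (circleTwist φ) n (c, 1) =
      (n : ℂ)⁻¹ * ∑ k ∈ Finset.range n, Complex.exp (ω * k * Complex.I) * φ (T^[k] c) := by
  rw [birkhoffAverage, birkhoffSum, smul_eq_mul]
  congr! 2 with k
  rw [circleTwist_iterate, Circle.coe_one, mul_one, Circle.coe_exp, ← Complex.exp_nat_mul]
  ring_nf

lemma circleExp_ne_one {ω : ℝ} (hω₀ : 0 < ω) (hω : ω < 2 * Real.pi) : Circle.exp ω ≠ 1 := by
  rw [Ne, Circle.exp_eq_one]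
  rintro ⟨n, rfl⟩
  have hn₀ : (0 : ℝ) < n := pos_of_mul_pos_left hω₀ Real.two_pi_pos.le
  have hn₁ : (n : ℝ) < 1 := by
    simpa using (mul_lt_iff_lt_one_left Real.two_pi_pos).mp hω
  norm_cast at hn₀ hn₁
  omega

end Rotation

section WienerWintner

variable {X : Type*} [TopologicalSpace X] [MeasurableSpace X] [OpensMeasurableSpace X]
  {T : X → X} {μ : Measure X} [IsProbabilityMeasure μ] {c : X}

theorem stmt_17_general (hT : Continuous T)
    (hmix : ∀ φ ψ : X →ᵇ ℂ, Tendsto (fun n : ℕ => (n : ℝ)⁻¹ * ∑ k ∈ Finset.range n,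
      ‖∫ x, φ (T^[k] x) * ψ x ∂μ - (∫ x, φ x ∂μ) * ∫ x, ψ x ∂μ‖) atTop (𝓝 0))
    (hBirk : ∀ φ : X →ᵇ ℂ, Tendsto (birkhoffAverage ℂ T φ · c) atTop (𝓝 (∫ x, φ x ∂μ)))
    (φ : X →ᵇ ℂ) {ω : ℝ} (hω₀ : 0 < ω) (hω : ω < 2 * Real.pi) :
    Tendsto (fun n : ℕ => (n : ℂ)⁻¹ * ∑ k ∈ Finset.range n,
      Complex.exp (ω * k * Complex.I) * φ (T^[k] c)) atTop (𝓝 0) := by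
  set m : ℂ := ∫ x, φ x ∂μ with hm
  let φ₀ : X →ᵇ ℂ := φ - .const X m
  have mean_zero : ∫ x, φ₀ x ∂μ = 0 := by
    calc ∫ x, φ₀ x ∂μ = ∫ x, φ x ∂μ - ∫ _, m ∂μ :=
          integral_sub (φ.integrable μ) (integrable_const m)
      _ = 0 := by rw [integral_const, probReal_univ, one_smul, hm, sub_self]
  have correlation_lim (h : ℕ) := hBirk (φ₀.compContinuous ⟨T^[h], hT.iterate h⟩ * star φ₀)
  have correlation_mean := hmix φ₀ (star φ₀)
  simp only [mean_zero, zero_mul, sub_zero] at correlation_mean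
  have centered_lim := tendsto_birkhoffAverage_circleTwist_zero
    (φ₀.isBounded_range.subset (range_comp_subset_range _ φ₀)) correlation_lim correlation_mean
    (Circle.exp ω) 1
  have decomposition : ⇑φ = ⇑φ₀ + fun _ => m := by
    funext x
    simp [φ₀]
  have h := centered_lim.add
    (tendsto_birkhoffAverage_circleTwist_const (circleExp_ne_one hω₀ hω) T m (c, 1))
  rw [add_zero] at h
  refine h.congr fun n => ?_
  rw [← birkhoffAverage_circleTwist_exp, decomposition, circleTwist_add, birkhoffAverage_add,
    Pi.add_apply, Pi.add_apply]

end WienerWintner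

/-- Birkhoff typicality implies Wiener–Wintner typicality: if `(T, μ)` is mixing on a
compact metric space and every Birkhoff average of continuous functions along the orbit of
`c` converges to the space average, then for every continuous `φ` and `ω ∈ (0, 2π)` the
rotated averages `(1/n) Σ_{k<n} e^{iωk} φ(T^k c)` tend to `0`. -/
theorem stmt_17 {X : Type*} [MetricSpace X] [CompactSpace X]
    [MeasurableSpace X] [BorelSpace X]
    (T : X → X) (hT : Continuous T)
    (μ : Measure X) [IsProbabilityMeasure μ]
    (hinv : ∀ A : Set X, MeasurableSet A → μ (T ⁻¹' A) = μ A)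
    (hmix : ∀ φ ψ : X → ℂ, Continuous φ → Continuous ψ →
      Tendsto (fun n : ℕ => ∫ x, φ (T^[n] x) * ψ x ∂μ) atTop
        (𝓝 ((∫ x, φ x ∂μ) * ∫ x, ψ x ∂μ)))
    (c : X)
    (hBirk : ∀ φ : X → ℂ, Continuous φ →
      Tendsto (fun n : ℕ => (n : ℂ)⁻¹ * ∑ k ∈ Finset.range n, φ (T^[k] c)) atTop
        (𝓝 (∫ x, φ x ∂μ))) :
    ∀ φ : X → ℂ, Continuous φ → ∀ ω : ℝ, 0 < ω → ω < 2 * Real.pi →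
      Tendsto (fun n : ℕ =>
          (n : ℂ)⁻¹ * ∑ k ∈ Finset.range n,
            Complex.exp ((ω : ℂ) * (k : ℂ) * Complex.I) * φ (T^[k] c)) atTop (𝓝 0) := by
  intro φ hφ ω hω₀ hω
  exact stmt_17_general hT (fun φ ψ => by
    simpa using ((hmix φ ψ φ.continuous ψ.continuous).sub_const
      ((∫ x, φ x ∂μ) * ∫ x, ψ x ∂μ)).norm.cesaro)
    (fun φ => hBirk φ φ.continuous) (.mkOfCompact ⟨φ, hφ⟩) hω₀ hω
end

section
/- Let (a_k)_{k≥0} be a sequence of complex numbers that is eventually periodic: there exist integers m ≥ 0 and p ≥ 1 with a_{k+p} = a_k for all k ≥ m. If (a_k)_{k≥0} admits a renascent right limit, then (a_k)_{k≥0} is periodic, i.e., a_{k+p} = a_k for all k ≥ 0; and in that case the unique renascent right limit of (a_k)_{k≥0} is the p-periodic extension of (a_k)_{k≥0} to ℤ. -/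
open Filter Topology

theorem periodic_of_periodic_natCast {R α : Type*} [AddMonoidWithOne R] {a : ℕ → α} {b : R → α}
    {p : ℕ} (hb : Function.Periodic b (p : R)) (hab : ∀ n : ℕ, b n = a n) :
    Function.Periodic a p := fun k => by
  rw [← hab, ← hab, Nat.cast_add, hb]

theorem eq_comp_emod_toNat_of_periodic {α : Type*} {a : ℕ → α} {b : ℤ → α} {p : ℕ}
    (hp : 0 < p) (hb : Function.Periodic b (p : ℤ)) (hab : ∀ n : ℕ, b n = a n) :
    b = fun n : ℤ => a (n % (p : ℤ)).toNat := by
  funext n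
  have hmod_nonneg : 0 ≤ n % (p : ℤ) := Int.emod_nonneg n (by omega)
  calc
    b n = b (n - n / p * p) := (hb.sub_int_mul_eq (n / p)).symm
    _ = b (n % p) := by rw [Int.emod_def, mul_comm]
    _ = b ((n % p).toNat : ℤ) := by rw [Int.toNat_of_nonneg hmod_nonneg]
    _ = a (n % p).toNat := hab _

theorem tendsto_toNat_add_natCast_atTop {ι : Type*} {l : Filter ι} {k : ι → ℕ}
    (hk : Tendsto k l atTop) (n : ℤ) :
    Tendsto (fun j => (n + (k j : ℤ)).toNat) l atTop := by
  refine tendsto_atTop.2 fun N => ?_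
  filter_upwards [hk.eventually_ge_atTop (N + n.natAbs)] with j hj
  omega

section T2Space

variable {E : Type*} [TopologicalSpace E] [T2Space E] {a : ℕ → E} {p : ℕ}

theorem IsRightLimit.periodic_of_eventually {b : ℤ → E} (hb : IsRightLimit a b)
    (ha : ∀ᶠ k in atTop, a (k + p) = a k) : Function.Periodic b (p : ℤ) := by
  -- A right limit only sees the tail of `a`, so the relation on the tail holds for `b` everywhere.
  obtain ⟨k, hk_mono, -, hk_lim⟩ := hb
  intro n
  have hindex : Tendsto (fun j => (n + (k j : ℤ)).toNat) atTop atTop :=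
    tendsto_toNat_add_natCast_atTop hk_mono.tendsto_atTop n
  refine tendsto_nhds_unique_of_eventuallyEq (hk_lim (n + p)) (hk_lim n) ?_
  -- Truncation by `toNat` commutes with the shift by `p` once `n + k j` is nonnegative.
  filter_upwards [hindex.eventually ha, hindex.eventually_gt_atTop 0] with j hperiod hpos
  rw [← hperiod]
  congr 1
  omega

theorem stmt_18_general (hp : 0 < p) (ha : ∀ᶠ k in atTop, a (k + p) = a k)
    (hex : ∃ b : ℤ → E, IsRightLimit a b ∧ ∀ n : ℕ, b n = a n) :
    Function.Periodic a p ∧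
      ∀ b : ℤ → E, IsRightLimit a b → (∀ n : ℕ, b n = a n) →
        b = fun n : ℤ => a (n % (p : ℤ)).toNat := by
  obtain ⟨b, hb, hab⟩ := hex
  exact ⟨periodic_of_periodic_natCast (hb.periodic_of_eventually ha) hab,
    fun _ hc hac => eq_comp_emod_toNat_of_periodic hp (hc.periodic_of_eventually ha) hac⟩

end T2Space

/-- If an eventually `p`-periodic sequence of complex numbers admits a renascent right
limit, then it is `p`-periodic, and its unique renascent right limit is its `p`-periodic
extension to `ℤ`. -/
theorem stmt_18 (a : ℕ → ℂ) (m p : ℕ) (hp : 1 ≤ p)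
    (hper : ∀ k, m ≤ k → a (k + p) = a k)
    (hex : ∃ bb : ℤ → ℂ, IsRightLimit a bb ∧ ∀ n : ℕ, bb (n : ℤ) = a n) :
    (∀ k, a (k + p) = a k) ∧
      ∀ bb : ℤ → ℂ, IsRightLimit a bb → (∀ n : ℕ, bb (n : ℤ) = a n) →
        bb = fun n : ℤ => a (n % (p : ℤ)).toNat :=
  stmt_18_general hp (eventually_atTop.2 ⟨m, hper⟩) hex
end

section
/- Let θ be an irrational real number and define a_k = {kθ} − 1/2 for k ≥ 0, where {·} denotes the fractional part. Then: (i) the two-sided sequence b⁻ defined by b⁻_n = {nθ} − 1/2 for n ∈ ℤ is a renascent right limit of (a_k)_{k≥0}, and it is the only renascent right limit of (a_k)_{k≥0}; (ii) the two-sided sequence b⁺ defined by b⁺_0 = 1/2 and b⁺_n = {nθ} − 1/2 for n ∈ ℤ \ {0} is also a right limit of (a_k)_{k≥0}. -/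
open Filter Topology

/-!
If `k j → ∞` and `{k j θ} → x` within `[0, 1)`, then `f ((n + k j) θ) = f (n θ + {k j θ})` for every
`f` of period `1`, so the limit of `f (n θ + t)` as `t → x` within `[0, 1)` is the `n`-th entry of a
right limit of `f (k θ)`. For irrational `θ` every `x ∈ [0, 1]` occurs. With `f = Int.fract`, the
phase `x = 0` gives `b⁻` by right continuity, and `x = 1` gives `b⁺`, which differs from `b⁻` only
where `n θ` is an integer. A renascent right limit has `b 0 = -1/2`, which forces the phase `0`.
-/

section

open Set

theorem exists_strictMono_pos_tendsto_of_mapClusterPt {X : Type*} [TopologicalSpace X]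
    [FirstCountableTopology X] {u : ℕ → X} {x : X} (h : MapClusterPt x atTop u) :
    ∃ k : ℕ → ℕ, StrictMono k ∧ (∀ j, 0 < k j) ∧ Tendsto (u ∘ k) atTop (𝓝 x) := by
  obtain ⟨k, hk, hlim⟩ := h.tendsto_subseq
  exact ⟨fun j => k (j + 1), hk.comp (strictMono_id.add_const 1),
    fun j => (Nat.zero_le _).trans_lt (hk j.lt_succ_self), hlim.comp (tendsto_add_atTop_nat 1)⟩

theorem IsRightLimit.map {E F : Type*} [TopologicalSpace E] [TopologicalSpace F] {a : ℕ → E}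
    {b : ℤ → E} (h : IsRightLimit a b) {g : E → F} (hg : Continuous g) :
    IsRightLimit (g ∘ a) (g ∘ b) := by
  obtain ⟨k, hk, hpos, hlim⟩ := h
  exact ⟨k, hk, hpos, fun n => (hg.tendsto (b n)).comp (hlim n)⟩

section FloorRing

variable {R : Type*} [Ring R] [LinearOrder R] [FloorRing R]

theorem map_add_fract_of_periodic_one {E : Type*} {f : R → E} (hf : Function.Periodic f 1)
    (x y : R) : f (x + Int.fract y) = f (x + y) := by
  rw [← Int.self_sub_floor, ← add_sub_assoc]
  simpa using hf.sub_int_mul_eq ⌊y⌋ (x := x + y)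

theorem tendsto_toNat_add_mul_of_periodic {ι E : Type*} [TopologicalSpace E] {f : R → E} {θ : R}
    {L : Filter ι} {l : Filter R} {k : ι → ℕ} {c : E} (hf : Function.Periodic f 1)
    (hk : Tendsto k L atTop) (hphase : Tendsto (fun j => Int.fract (k j * θ)) L l) (n : ℤ)
    (hc : Tendsto (fun t => f (n * θ + t)) l (𝓝 c)) :
    Tendsto (fun j => f ((n + k j : ℤ).toNat * θ)) L (𝓝 c) := by
  refine (hc.comp hphase).congr' ?_
  filter_upwards [hk.eventually_ge_atTop (-n).toNat] with j hj
  have hcast : ((n + k j : ℤ).toNat : R) = n + k j := by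
    exact_mod_cast congrArg (Int.cast : ℤ → R) (Int.toNat_of_nonneg (by omega : 0 ≤ n + (k j : ℤ)))
  rw [hcast, add_mul]
  exact map_add_fract_of_periodic_one hf _ _

variable [IsStrictOrderedRing R] [TopologicalSpace R] [OrderTopology R]

theorem tendsto_fract_add_nhdsGE_zero (x : R) :
    Tendsto (fun t => Int.fract (x + t)) (𝓝[≥] 0) (𝓝 (Int.fract x)) := by
  have hfract : ContinuousWithinAt Int.fract (Ici x) x :=
    (continuousOn_fract ⌊x⌋ x ⟨Int.floor_le x, Int.lt_floor_add_one x⟩).mono_of_mem_nhdsWithin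
      (mem_of_superset (Ico_mem_nhdsGE (Int.lt_floor_add_one x))
        (Ico_subset_Ico_left (Int.floor_le x)))
  refine Tendsto.comp hfract (tendsto_nhdsWithin_iff.2 ⟨?_, ?_⟩)
  · exact ((continuous_const_add x).tendsto' 0 x (add_zero x)).mono_left nhdsWithin_le_nhds
  · filter_upwards [self_mem_nhdsWithin] with t ht using le_add_of_nonneg_right (mem_Ici.1 ht)

theorem tendsto_fract_add_one {x : R} (hx : x ≠ ⌊x⌋) :
    Tendsto (fun t => Int.fract (x + t)) (𝓝 1) (𝓝 (Int.fract x)) := by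
  simp_rw [← Int.fract_add_one x]
  have hcont : ContinuousAt Int.fract (x + 1) := continuousAt_fract (by simpa using hx)
  exact hcont.tendsto.comp ((continuous_const_add x).tendsto 1)

theorem IsRightLimit.eq_fract_of_apply_zero {θ : R} {b : ℤ → R}
    (h : IsRightLimit (fun k : ℕ => Int.fract (k * θ)) b) (h0 : b 0 = 0) :
    b = fun n : ℤ => Int.fract (n * θ) := by
  obtain ⟨k, hk, -, hlim⟩ := h
  have hphase : Tendsto (fun j => Int.fract (k j * θ)) atTop (𝓝[≥] 0) :=
    tendsto_nhdsWithin_iff.2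
      ⟨by simpa [h0] using hlim 0, .of_forall fun _ => mem_Ici.2 (Int.fract_nonneg _)⟩
  funext n
  exact tendsto_nhds_unique (hlim n) (tendsto_toNat_add_mul_of_periodic (Int.fract_periodic R)
    hk.tendsto_atTop hphase n (tendsto_fract_add_nhdsGE_zero _))

end FloorRing

theorem mapClusterPt_nsmul_coe_of_irrational {a p : ℝ} [Fact (0 < p)] (h : Irrational (a / p))
    (y : AddCircle p) : MapClusterPt y atTop (· • (a : AddCircle p) : ℕ → AddCircle p) :=
  ((mapClusterPt_atTop_nsmul_tfae y (a : AddCircle p)).out 0 3).2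
    (AddCircle.denseRange_zsmul_coe_iff.2 h y)

theorem mapClusterPt_fract_natCast_mul_of_mem_Ioo {θ x : ℝ} (hθ : Irrational θ)
    (hx : x ∈ Ioo 0 1) : MapClusterPt x atTop (fun k : ℕ => Int.fract (k * θ)) := by
  have hne : (x : UnitAddCircle) ≠ (0 : ℝ) := fun h =>
    hx.1.ne' ((AddCircle.coe_eq_zero_iff_of_mem_Ico ⟨hx.1.le, hx.2⟩).1 h)
  have hlift (y : ℝ) : (AddCircle.equivIco (1 : ℝ) 0 y : ℝ) = Int.fract y := by simp
  have hcont : ContinuousAt (fun y => (AddCircle.equivIco (1 : ℝ) 0 y : ℝ)) x :=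
    continuousAt_subtype_val.comp (AddCircle.continuousAt_equivIco 1 0 hne)
  have hcluster :=
    (mapClusterPt_nsmul_coe_of_irrational (p := 1) (by simpa using hθ) x).continuousAt_comp hcont
  simpa only [Function.comp_def, ← AddCircle.coe_nsmul, hlift, nsmul_eq_mul,
    Int.fract_eq_self.2 ⟨hx.1.le, hx.2⟩] using hcluster

theorem mapClusterPt_fract_natCast_mul {θ x : ℝ} (hθ : Irrational θ) (hx : x ∈ Icc 0 1) :
    MapClusterPt x atTop (fun k : ℕ => Int.fract (k * θ)) := by
  rw [← closure_Ioo zero_ne_one] at hx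
  exact closure_minimal (fun _ => mapClusterPt_fract_natCast_mul_of_mem_Ioo hθ)
    isClosed_setOfPred_clusterPt hx

theorem isRightLimit_natCast_mul_of_periodic {E : Type*} [TopologicalSpace E] {f : ℝ → E} {θ x : ℝ}
    {b : ℤ → E} (hθ : Irrational θ) (hf : Function.Periodic f 1) (hx : x ∈ Icc 0 1)
    (hb : ∀ n : ℤ, Tendsto (fun t => f (n * θ + t)) (𝓝[Ico 0 1] x) (𝓝 (b n))) :
    IsRightLimit (fun k : ℕ => f (k * θ)) b := by
  obtain ⟨k, hk, hpos, hlim⟩ :=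
    exists_strictMono_pos_tendsto_of_mapClusterPt (mapClusterPt_fract_natCast_mul hθ hx)
  have hphase : Tendsto (fun j => Int.fract (k j * θ)) atTop (𝓝[Ico 0 1] x) :=
    tendsto_nhdsWithin_iff.2
      ⟨hlim, .of_forall fun _ => ⟨Int.fract_nonneg _, Int.fract_lt_one _⟩⟩
  exact ⟨k, hk, hpos, fun n =>
    tendsto_toNat_add_mul_of_periodic hf hk.tendsto_atTop hphase n (hb n)⟩

theorem isRightLimit_fract_natCast_mul {θ : ℝ} (hθ : Irrational θ) :
    IsRightLimit (fun k : ℕ => Int.fract (k * θ)) (fun n : ℤ => Int.fract (n * θ)) := by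
  refine isRightLimit_natCast_mul_of_periodic hθ (Int.fract_periodic ℝ)
    (left_mem_Icc.2 zero_le_one) fun n => ?_
  rw [nhdsWithin_Ico_eq_nhdsGE one_pos]
  exact tendsto_fract_add_nhdsGE_zero _

theorem isRightLimit_fract_natCast_mul_ite {θ : ℝ} (hθ : Irrational θ) :
    IsRightLimit (fun k : ℕ => Int.fract (k * θ))
      (fun n : ℤ => if n = 0 then 1 else Int.fract (n * θ)) := by
  refine isRightLimit_natCast_mul_of_periodic hθ (Int.fract_periodic ℝ)
    (right_mem_Icc.2 zero_le_one) fun n => ?_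
  rw [nhdsWithin_Ico_eq_nhdsLT one_pos]
  rcases eq_or_ne n 0 with rfl | hn
  · simpa using tendsto_fract_left' (α := ℝ) 1
  · simpa only [if_neg hn] using
      (tendsto_fract_add_one ((hθ.intCast_mul hn).ne_int _)).mono_left nhdsWithin_le_nhds

end

/-- Hecke's example: for irrational `θ` and `a_k = {kθ} - 1/2`, the sequence
`b⁻_n = {nθ} - 1/2` is the unique renascent right limit of `(a_k)`, and the sequence `b⁺`
with `b⁺_0 = 1/2` and `b⁺_n = {nθ} - 1/2` for `n ≠ 0` is also a right limit of `(a_k)`. -/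
theorem stmt_19 (θ : ℝ) (hθ : Irrational θ) :
    -- (i) b⁻ is a renascent right limit of (a_k)
    (IsRightLimit (fun k : ℕ => Int.fract ((k : ℝ) * θ) - 1 / 2)
        (fun n : ℤ => Int.fract ((n : ℝ) * θ) - 1 / 2) ∧
      ∀ n : ℕ, Int.fract (((n : ℤ) : ℝ) * θ) - 1 / 2 = Int.fract ((n : ℝ) * θ) - 1 / 2) ∧
    -- (i) ... and it is the only renascent right limit
    (∀ bb : ℤ → ℝ, IsRightLimit (fun k : ℕ => Int.fract ((k : ℝ) * θ) - 1 / 2) bb →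
      (∀ n : ℕ, bb (n : ℤ) = Int.fract ((n : ℝ) * θ) - 1 / 2) →
      bb = fun n : ℤ => Int.fract ((n : ℝ) * θ) - 1 / 2) ∧
    -- (ii) b⁺ is also a right limit
    IsRightLimit (fun k : ℕ => Int.fract ((k : ℝ) * θ) - 1 / 2)
      (fun n : ℤ => if n = 0 then 1 / 2 else Int.fract ((n : ℝ) * θ) - 1 / 2) := by
  have hshift : Continuous fun x : ℝ => x - 1 / 2 := continuous_sub_right _
  have hunshift : Continuous fun x : ℝ => x + 1 / 2 := continuous_add_const _
  refine ⟨⟨(isRightLimit_fract_natCast_mul hθ).map hshift, fun n => by rw [Int.cast_natCast]⟩,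
    fun bb hbb hren => ?_, ?_⟩
  · have hunshifted : IsRightLimit (fun k : ℕ => Int.fract (k * θ)) (fun n => bb n + 1 / 2) := by
      simpa only [Function.comp_def, sub_add_cancel] using hbb.map hunshift
    have hzero : bb 0 + 1 / 2 = 0 := by simpa [add_eq_zero_iff_eq_neg] using hren 0
    funext n
    exact eq_sub_of_add_eq (congrFun (hunshifted.eq_fract_of_apply_zero hzero) n)
  · have hends : (fun x : ℝ => x - 1 / 2) ∘ (fun n : ℤ => if n = 0 then 1 else Int.fract (n * θ)) =
        fun n : ℤ => if n = 0 then 1 / 2 else Int.fract (n * θ) - 1 / 2 := by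
      funext n
      simp only [Function.comp_apply]
      split_ifs <;> norm_num
    exact hends ▸ (isRightLimit_fract_natCast_mul_ite hθ).map hshift
end
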